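/- arXiv:1504.03227 — 2 statements merged into one kernel-verified Lean document; each statement's English description precedes it below -/
import Mathlib

section
/- Let p ≥ 11 be a prime, r ≥ 2 an integer, and n a positive integer with p^r | n and p^{r+1} ∤ n. Then the sum of 1/(l_1⋯l_6) over all 6-tuples of positive integers with l_1+⋯+l_6 = n and each l_i coprime to p is congruent to -(5!/18)·(n/p)·B_{p-3}² modulo p^r. -/
/-- `x ≡ y (mod p^r)` as p-integral rationals. -/
def ratCong (p r : ℕ) (x y : ℚ) : Prop :=
  ∃ z : ℚ, x - y = (p : ℚ) ^ r * z ∧ ¬ (p ∣ z.den)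

/-- Sum of `1/(l₁⋯lₙ)` over positive `n`-tuples summing to `N` with each `lᵢ` coprime to `p`. -/
def hsum (p n N : ℕ) : ℚ :=
  ∑ l ∈ (Fintype.piFinset fun _ : Fin n => Finset.Icc 1 N) |>.filter
      (fun l => ∑ i, l i = N ∧ ∀ i, ¬ p ∣ l i),
    ∏ i, (1 : ℚ) / l i

/-!
Let `H_a` be the sum of `1 / (u₁⋯u₆)` over the `uᵢ` in `{1, …, p - 1}` with `∑ uᵢ = a p`. Write a
tuple of sum `n = p m` as `lᵢ = uᵢ + p yᵢ` with `∑ uᵢ = a p` and `∑ yᵢ = m - a`. The `j`-th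
differences of `y ↦ 1 / (u + p y)` are divisible by `p ^ j`, so Newton's expansion in binomial
coefficients shows that, modulo `p ^ r`, the tuples over a given `u` contribute
`C(m + 5 - a, 5) / (u₁⋯u₆)`. Since
`5! C(m + 5 - a, 5) ≡ (-1) ^ (a - 1) (a - 1)! (5 - a)! m` modulo `m ^ 2`, only the `H_a` modulo `p`
remain to be found. Scaling the residues `uᵢ` by units modulo `p` gives `H_a ≡ H_{6-a}` and
`∑ H_a ≡ 0`, so `H_1` and `H_2` determine all of them, and these follow from the sums over tuples
of sum `p` and `2 p`.

Those two sums are coefficients of powers of the part of `-log (1 - X)` prime to `p`. To the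
precision needed they are coefficients of `(-log (1 - X)) ^ k`, that is, of rising factorials.
Those coefficients come from `(X + 1)⋯(X + p - 1)`, whose coefficients Newton's identities express
modulo `p ^ 2` by power sums, hence by Bernoulli numbers; the result is `H_1 ≡ 0` and
`H_2 ≡ 40 B_{p-3} ^ 2`.
-/

open Finset

/-- The ideal `p ^ k ℤ_(p)` of the ring of `p`-integral rationals, as an additive subgroup of `ℚ`.
Congruences modulo `p ^ k` between `p`-integral rationals are memberships of differences in it. -/
def padicIdeal (p : ℕ) [Fact p.Prime] (k : ℕ) : AddSubgroup ℚ where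
  carrier := {x | padicNorm p x ≤ (p : ℚ) ^ (-k : ℤ)}
  zero_mem' := by simp only [Set.mem_ofPred_eq, padicNorm.zero]; positivity
  add_mem' hx hy := padicNorm.nonarchimedean.trans (max_le hx hy)
  neg_mem' {x} hx := by simpa only [Set.mem_ofPred_eq, padicNorm.neg] using hx

namespace padicIdeal

variable {p : ℕ} [Fact p.Prime] {k l : ℕ} {x y : ℚ}

theorem mem_iff : x ∈ padicIdeal p k ↔ padicNorm p x ≤ (p : ℚ) ^ (-k : ℤ) :=
  Iff.rfl

theorem prime_cast_pos : (0 : ℚ) < p :=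
  Nat.cast_pos.2 (Fact.out : p.Prime).pos

theorem intCast_mem_iff {a : ℤ} : (a : ℚ) ∈ padicIdeal p k ↔ (p : ℤ) ^ k ∣ a := by
  rw [mem_iff, ← padicNorm.dvd_iff_norm_le, Nat.cast_pow]

theorem intCast_mem_one_iff {a : ℤ} : (a : ℚ) ∈ padicIdeal p 1 ↔ (p : ℤ) ∣ a := by
  rw [intCast_mem_iff, pow_one]

theorem intCast_mem_zero (a : ℤ) : (a : ℚ) ∈ padicIdeal p 0 :=
  intCast_mem_iff.2 (by simp)

theorem natCast_mem_zero (a : ℕ) : (a : ℚ) ∈ padicIdeal p 0 :=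
  mod_cast intCast_mem_zero (p := p) a

theorem mul_mem (hx : x ∈ padicIdeal p k) (hy : y ∈ padicIdeal p l) :
    x * y ∈ padicIdeal p (k + l) := by
  rw [mem_iff, padicNorm.mul, Nat.cast_add, neg_add, zpow_add₀ prime_cast_pos.ne']
  exact mul_le_mul hx hy (padicNorm.nonneg _) (by positivity)

theorem mul_mem_of_left (hx : x ∈ padicIdeal p k) (hy : y ∈ padicIdeal p 0) :
    x * y ∈ padicIdeal p k :=
  k.add_zero ▸ mul_mem hx hy

theorem mul_mem_of_right (hx : x ∈ padicIdeal p 0) (hy : y ∈ padicIdeal p k) :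
    x * y ∈ padicIdeal p k :=
  k.zero_add ▸ mul_mem hx hy

theorem antitone (h : k ≤ l) : padicIdeal p l ≤ padicIdeal p k := fun _ hx =>
  (mem_iff.1 hx).trans (zpow_le_zpow_right₀ (Nat.one_le_cast.2 (Fact.out : p.Prime).one_le)
    (neg_le_neg (Nat.cast_le.2 h)))

theorem pow_mul_mem_iff : (p : ℚ) ^ l * x ∈ padicIdeal p (l + k) ↔ x ∈ padicIdeal p k := by
  have hp := prime_cast_pos (p := p)
  have hnorm : padicNorm p ((p : ℚ) ^ l) = (p : ℚ) ^ (-l : ℤ) := by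
    rw [IsAbsoluteValue.abv_pow (padicNorm p), padicNorm.padicNorm_p_of_prime, inv_pow, zpow_neg,
      zpow_natCast]
  rw [mem_iff, mem_iff, padicNorm.mul, hnorm, Nat.cast_add, neg_add, zpow_add₀ hp.ne',
    mul_le_mul_iff_right₀ (by positivity)]

theorem intCast_mul_mem_iff {n : ℤ} (hn : ¬ (p : ℤ) ∣ n) :
    (n : ℚ) * x ∈ padicIdeal p k ↔ x ∈ padicIdeal p k := by
  rw [mem_iff, mem_iff, padicNorm.mul, (padicNorm.int_eq_one_iff n).2 hn, one_mul]

theorem inv_natCast_mem_zero {n : ℕ} (hn : ¬ p ∣ n) : (n : ℚ)⁻¹ ∈ padicIdeal p 0 := by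
  rw [mem_iff, IsAbsoluteValue.abv_inv (padicNorm p), (padicNorm.nat_eq_one_iff n).2 hn]
  simp

theorem prod_mem {ι : Type*} {s : Finset ι} {f : ι → ℚ} {e : ι → ℕ}
    (h : ∀ i ∈ s, f i ∈ padicIdeal p (e i)) : ∏ i ∈ s, f i ∈ padicIdeal p (∑ i ∈ s, e i) := by
  classical
  induction s using Finset.induction_on with
  | empty => simpa using natCast_mem_zero (p := p) 1
  | insert a s ha ih =>
    rw [prod_insert ha, sum_insert ha]
    exact mul_mem (h a (mem_insert_self a s)) (ih fun i hi => h i (mem_insert_of_mem hi))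

theorem prod_mem_zero {ι : Type*} {s : Finset ι} {f : ι → ℚ}
    (h : ∀ i ∈ s, f i ∈ padicIdeal p 0) : ∏ i ∈ s, f i ∈ padicIdeal p 0 := by
  simpa using prod_mem (e := fun _ => 0) h

theorem prod_sub_prod_mem {ι : Type*} {s : Finset ι} {f g : ι → ℚ}
    (hf : ∀ i ∈ s, f i ∈ padicIdeal p 0) (hg : ∀ i ∈ s, g i ∈ padicIdeal p 0)
    (h : ∀ i ∈ s, f i - g i ∈ padicIdeal p k) :
    ∏ i ∈ s, f i - ∏ i ∈ s, g i ∈ padicIdeal p k := by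
  classical
  induction s using Finset.induction_on with
  | empty => simp
  | insert a s ha ih =>
    simp only [forall_mem_insert] at hf hg h
    have split : ∏ i ∈ insert a s, f i - ∏ i ∈ insert a s, g i =
        f a * (∏ i ∈ s, f i - ∏ i ∈ s, g i) + (f a - g a) * ∏ i ∈ s, g i := by
      rw [prod_insert ha, prod_insert ha]
      ring
    rw [split]
    exact add_mem (mul_mem_of_right hf.1 (ih hf.2 hg.2 h.2))
      (mul_mem_of_left h.1 (prod_mem_zero hg.2))

theorem not_dvd_den_of_mem_zero (hx : x ∈ padicIdeal p 0) : ¬ p ∣ x.den := by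
  intro hd
  have hnum : ¬ (p : ℤ) ∣ x.num := fun h => Nat.not_coprime_of_dvd_of_dvd
    (Fact.out : p.Prime).one_lt (Int.natCast_dvd.1 h) hd x.reduced
  have hden : ((x.den : ℤ) : ℚ) ∈ padicIdeal p 1 :=
    intCast_mem_one_iff.2 (Int.natCast_dvd_natCast.2 hd)
  have hmem : (x.num : ℚ) ∈ padicIdeal p 1 := by
    rw [← Rat.den_mul_eq_num]
    exact mul_mem_of_left hden hx
  exact hnum (intCast_mem_one_iff.1 hmem)

end padicIdeal

theorem ratCong_of_sub_mem {p r : ℕ} [Fact p.Prime] {x y : ℚ} (h : x - y ∈ padicIdeal p r) :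
    ratCong p r x y := by
  have hp : (p : ℚ) ^ r ≠ 0 := pow_ne_zero r padicIdeal.prime_cast_pos.ne'
  have hz : x - y = (p : ℚ) ^ r * ((x - y) / (p : ℚ) ^ r) := (mul_div_cancel₀ _ hp).symm
  refine ⟨(x - y) / (p : ℚ) ^ r, hz, padicIdeal.not_dvd_den_of_mem_zero ?_⟩
  rw [hz] at h
  exact padicIdeal.pow_mul_mem_iff.1 h

section PowerSeries

open PowerSeries

theorem coeff_prod_univ_eq_sum_piAntidiag {R ι : Type*} [CommSemiring R] [Fintype ι]
    [DecidableEq ι] (f : ι → R⟦X⟧) (n : ℕ) :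
    coeff n (∏ i, f i) = ∑ l ∈ piAntidiag univ n, ∏ i, coeff (l i) (f i) := by
  rw [coeff_prod]
  exact sum_equiv Finsupp.equivFunOnFinite (by simp) (by simp)

/-- The generating function `∑ X ^ l / l` over the integers `l` prime to `p`. -/
noncomputable def primeToSeries (p : ℕ) : ℚ⟦X⟧ :=
  mk fun l => if p ∣ l then 0 else 1 / (l : ℚ)

theorem hsum_eq_sum_piAntidiag (p k n : ℕ) :
    hsum p k n = ∑ l ∈ piAntidiag (univ : Finset (Fin k)) n with ∀ i, ¬ p ∣ l i,
      ∏ i, 1 / (l i : ℚ) := by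
  refine sum_congr ?_ fun _ _ => rfl
  ext l
  simp only [mem_filter, Fintype.mem_piFinset, mem_Icc, mem_piAntidiag, mem_univ, implies_true,
    and_true, and_iff_right_iff_imp]
  rintro ⟨htotal, hdvd⟩ i
  exact ⟨Nat.pos_of_ne_zero fun h => hdvd i (h ▸ dvd_zero p),
    htotal ▸ single_le_sum (fun _ _ => Nat.zero_le _) (mem_univ i)⟩

theorem hsum_eq_coeff_pow (p k n : ℕ) : hsum p k n = coeff n (primeToSeries p ^ k) := by
  rw [hsum_eq_sum_piAntidiag, sum_filter, ← Fin.prod_const, coeff_prod_univ_eq_sum_piAntidiag]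
  refine sum_congr rfl fun l _ => ?_
  simp only [primeToSeries, coeff_mk]
  split_ifs with h
  · exact prod_congr rfl fun i _ => (if_neg (h i)).symm
  · obtain ⟨i, hi⟩ := not_forall_not.1 h
    rw [prod_eq_zero (mem_univ i) (by rw [if_pos hi])]

/-- The power series `-log (1 - X) = ∑ X ^ l / l`, whose constant coefficient is `1 / 0 = 0`. -/
noncomputable def negLogOneSub : ℚ⟦X⟧ :=
  mk fun l => 1 / (l : ℚ)

theorem one_sub_X_mul_derivative_negLogOneSub : (1 - X) * derivative ℚ negLogOneSub = 1 := by
  have hderiv : derivative ℚ negLogOneSub = PowerSeries.mk 1 := by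
    ext n
    rw [coeff_derivative, negLogOneSub, coeff_mk, coeff_mk, Pi.one_apply, Nat.cast_succ]
    exact one_div_mul_cancel n.cast_add_one_ne_zero
  rw [hderiv, mul_comm, mk_one_mul_one_sub_eq_one]

theorem coeff_succ_negLogOneSub_pow_succ (n k : ℕ) :
    (n + 1) * coeff (n + 1) (negLogOneSub ^ (k + 1)) =
      n * coeff n (negLogOneSub ^ (k + 1)) + (k + 1) * coeff n (negLogOneSub ^ k) := by
  have hderiv : (1 - X) * derivative ℚ (negLogOneSub ^ (k + 1)) =
      ((k + 1 : ℕ) : ℚ) • negLogOneSub ^ k := by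
    rw [derivative_pow, Nat.add_sub_cancel, mul_left_comm, one_sub_X_mul_derivative_negLogOneSub,
      mul_one, Nat.cast_smul_eq_nsmul, nsmul_eq_mul]
  have hcoeff := congrArg (coeff n) hderiv
  rw [sub_mul, one_mul, map_sub, coeff_derivative, coeff_smul, smul_eq_mul] at hcoeff
  push_cast at hcoeff
  rcases n with _ | n
  · simp only [coeff_zero_X_mul] at hcoeff
    linear_combination hcoeff
  · rw [coeff_succ_X_mul, coeff_derivative] at hcoeff
    push_cast at hcoeff ⊢
    linear_combination hcoeff

theorem factorial_mul_coeff_negLogOneSub_pow (n k : ℕ) :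
    (n.factorial : ℚ) * coeff n (negLogOneSub ^ k) =
      k.factorial * ((ascPochhammer ℤ n).coeff k : ℚ) := by
  induction n generalizing k with
  | zero => cases k <;> simp [negLogOneSub, Polynomial.coeff_one]
  | succ n ih =>
    cases k with
    | zero => simp [coeff_one, ascPochhammer_ne_zero_eval_zero, Polynomial.coeff_zero_eq_eval_zero]
    | succ k =>
      rw [ascPochhammer_succ_right, mul_add, Polynomial.coeff_add, Polynomial.coeff_mul_X,
        Polynomial.coeff_mul_natCast, Nat.factorial_succ n]
      have hk := ih k
      have hk1 := ih (k + 1)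
      have hrec := coeff_succ_negLogOneSub_pow_succ n k
      rw [Nat.factorial_succ k] at hk1 ⊢
      push_cast at hk1 ⊢
      linear_combination (n.factorial : ℚ) * hrec + (n : ℚ) * hk1 + (k + 1 : ℚ) * hk

theorem factorial_eq_mul_coeff_one_ascPochhammer {n : ℕ} (hn : n ≠ 0) :
    (n.factorial : ℤ) = n * (ascPochhammer ℤ n).coeff 1 := by
  have hn' : (n : ℚ) ≠ 0 := Nat.cast_ne_zero.2 hn
  have hcoeff := factorial_mul_coeff_negLogOneSub_pow n 1
  rw [pow_one, negLogOneSub, coeff_mk, Nat.factorial_one, Nat.cast_one, one_mul] at hcoeff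
  rw [← Int.cast_inj (α := ℚ), Int.cast_mul, ← hcoeff]
  push_cast
  field_simp

theorem constantCoeff_primeToSeries (p : ℕ) : constantCoeff (primeToSeries p) = 0 := by
  simp [primeToSeries]

theorem pow_dvd_add_pow_sub {R : Type*} [CommRing R] {t f : R} (hf : t ∣ f) (u : R) {p k : ℕ}
    (hp : p ≠ 0) (hk : 2 ≤ k) :
    t ^ (k + 2 * (p - 1)) ∣
      (f + t ^ p * u) ^ k - f ^ k - k * f ^ (k - 1) * (t ^ p * u) := by
  obtain ⟨g, rfl⟩ := hf
  obtain ⟨q, rfl⟩ := Nat.exists_eq_succ_of_ne_zero hp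
  obtain ⟨m, rfl⟩ := Nat.exists_eq_add_of_le' hk
  obtain ⟨c, hc⟩ := Polynomial.powAddExpansion g (t ^ q * u) (m + 2)
  refine ⟨c * u ^ 2, ?_⟩
  simp only [Nat.add_succ_sub_one, Nat.succ_eq_add_one, add_tsub_cancel_right] at hc ⊢
  have hfactor : t * g + t ^ (q + 1) * u = t * (g + t ^ q * u) := by ring
  rw [hfactor, mul_pow, hc]
  ring

/-- The part `∑ X ^ l / (l + p)`, over multiples `l` of `p`, of `-log (1 - X)` that
`primeToSeries p` leaves out, divided by `X ^ p`. -/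
noncomputable def multiplesSeries (p : ℕ) : ℚ⟦X⟧ :=
  mk fun l => if p ∣ l then 1 / ((l + p : ℕ) : ℚ) else 0

theorem negLogOneSub_eq_add {p : ℕ} (hp : 0 < p) :
    negLogOneSub = primeToSeries p + X ^ p * multiplesSeries p := by
  ext l
  rw [map_add, coeff_X_pow_mul']
  simp only [negLogOneSub, primeToSeries, multiplesSeries, coeff_mk]
  by_cases hle : p ≤ l
  · obtain ⟨m, rfl⟩ := Nat.exists_eq_add_of_le' hle
    by_cases hdvd : p ∣ m <;> simp [hdvd]
  · rcases l.eq_zero_or_pos with rfl | hl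
    · simp [hp.ne']
    · simp [hle, Nat.not_dvd_of_pos_of_lt hl (not_le.1 hle)]

theorem coeff_negLogOneSub_pow {p k n : ℕ} (hp : 0 < p) (hk : 2 ≤ k) (hn : n < k + 2 * (p - 1)) :
    coeff n (negLogOneSub ^ k) = coeff n (primeToSeries p ^ k) +
      k * coeff n (X ^ p * (primeToSeries p ^ (k - 1) * multiplesSeries p)) := by
  have hdvd := pow_dvd_add_pow_sub (X_dvd_iff.2 (constantCoeff_primeToSeries p))
    (multiplesSeries p) hp.ne' hk
  rw [← negLogOneSub_eq_add hp, X_pow_dvd_iff] at hdvd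
  have hcoeff := hdvd n hn
  have hcomm : (k : ℚ⟦X⟧) * primeToSeries p ^ (k - 1) * (X ^ p * multiplesSeries p) =
      k • (X ^ p * (primeToSeries p ^ (k - 1) * multiplesSeries p)) := by
    rw [nsmul_eq_mul]
    ring
  rw [hcomm, map_sub, map_sub, map_nsmul, nsmul_eq_mul] at hcoeff
  linear_combination hcoeff

theorem coeff_primeToSeries_pow_mul_multiplesSeries {p k : ℕ} (hk : k ≠ 0) :
    coeff p (primeToSeries p ^ k * multiplesSeries p) =
      coeff p (primeToSeries p ^ k) / p := by
  rw [coeff_mul, sum_eq_single (p, 0)]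
  · simp [multiplesSeries, div_eq_mul_inv]
  · rintro ⟨i, j⟩ hij hne
    rw [HasAntidiagonal.mem_antidiagonal] at hij
    by_cases hi : i = 0
    · simp [hi, constantCoeff_primeToSeries, hk]
    · have hj : ¬ p ∣ j := Nat.not_dvd_of_pos_of_lt
        (Nat.pos_of_ne_zero fun h => hne (by simp only [Prod.mk.injEq]; omega)) (by omega)
      rw [multiplesSeries, coeff_mk, if_neg hj, mul_zero]
  · simp

theorem factorial_mul_hsum_self {p k : ℕ} (hp : 0 < p) (hk : 2 ≤ k) :
    (p.factorial : ℚ) * hsum p k p = k.factorial * ((ascPochhammer ℤ p).coeff k : ℚ) := by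
  rw [← factorial_mul_coeff_negLogOneSub_pow, coeff_negLogOneSub_pow (n := p) hp hk (by omega),
    coeff_X_pow_mul', if_pos le_rfl, Nat.sub_self, ← hsum_eq_coeff_pow]
  simp [constantCoeff_primeToSeries, show k - 1 ≠ 0 by omega]

theorem factorial_mul_hsum_two_mul {p k : ℕ} (hp : 0 < p) (hk : 3 ≤ k) :
    ((2 * p).factorial : ℚ) * (hsum p k (2 * p) + k / p * hsum p (k - 1) p) =
      k.factorial * ((ascPochhammer ℤ (2 * p)).coeff k : ℚ) := by
  rw [← factorial_mul_coeff_negLogOneSub_pow,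
    coeff_negLogOneSub_pow (n := 2 * p) hp (by omega) (by omega), two_mul,
    coeff_X_pow_mul, coeff_primeToSeries_pow_mul_multiplesSeries (by omega),
    ← hsum_eq_coeff_pow, ← hsum_eq_coeff_pow]
  ring

end PowerSeries

section Bernoulli

variable {p : ℕ} [Fact p.Prime]

theorem inv_natCast_mem_of_pos_of_lt {n : ℕ} (hpos : 0 < n) (hlt : n < p) :
    (n : ℚ)⁻¹ ∈ padicIdeal p 0 :=
  padicIdeal.inv_natCast_mem_zero (Nat.not_dvd_of_pos_of_lt hpos hlt)

theorem bernoulli'_mem_padicIdeal {k : ℕ} (hk : k + 1 < p) : bernoulli' k ∈ padicIdeal p 0 := by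
  induction k using Nat.strong_induction_on with
  | _ k ih =>
    rw [bernoulli'_def]
    refine sub_mem (mod_cast padicIdeal.natCast_mem_zero 1) (sum_mem fun j hj => ?_)
    rw [mem_range] at hj
    have hinv := inv_natCast_mem_of_pos_of_lt (p := p) (n := k - j + 1) (by omega) (by omega)
    rw [Nat.cast_add, Nat.cast_sub hj.le, Nat.cast_one] at hinv
    exact padicIdeal.mul_mem_of_left
      (padicIdeal.mul_mem_of_left (padicIdeal.natCast_mem_zero _) hinv) (ih j hj (by omega))

theorem bernoulli_mem_padicIdeal {k : ℕ} (hk : k + 1 < p) : bernoulli k ∈ padicIdeal p 0 := by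
  have hsign := padicIdeal.intCast_mem_zero (p := p) ((-1) ^ k)
  rw [Int.cast_pow, Int.cast_neg, Int.cast_one] at hsign
  exact padicIdeal.mul_mem_of_left hsign (bernoulli'_mem_padicIdeal hk)

theorem sum_range_pow_sub_mem_padicIdeal {k : ℕ} (hk : k + 1 < p) :
    ∑ i ∈ range p, (i : ℚ) ^ k - p * bernoulli k ∈ padicIdeal p 2 := by
  have hlast : bernoulli k * ((k + 1).choose k : ℕ) * (p : ℚ) ^ (k + 1 - k) / (k + 1) =
      p * bernoulli k := by
    rw [Nat.choose_succ_self_right, Nat.add_sub_cancel_left, Nat.cast_succ]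
    field_simp [k.cast_add_one_ne_zero (R := ℚ)]
  rw [sum_range_pow, sum_range_succ, hlast, add_sub_cancel_right]
  refine sum_mem fun j hj => ?_
  rw [mem_range] at hj
  have hinv := inv_natCast_mem_of_pos_of_lt (p := p) (n := k + 1) k.succ_pos hk
  have hpow : (p : ℚ) ^ (k + 1 - j) ∈ padicIdeal p 2 :=
    mod_cast padicIdeal.intCast_mem_iff.2 (pow_dvd_pow (p : ℤ) (by omega))
  rw [Nat.cast_succ] at hinv
  rw [div_eq_mul_inv]
  exact padicIdeal.mul_mem_of_left (padicIdeal.mul_mem_of_right (padicIdeal.mul_mem_of_left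
    (bernoulli_mem_padicIdeal (by omega)) (padicIdeal.natCast_mem_zero _)) hpow) hinv

theorem prime_dvd_sum_range_pow {k : ℕ} (hk : k + 1 < p) :
    (p : ℤ) ∣ ∑ i ∈ range p, (i : ℤ) ^ k := by
  rw [← padicIdeal.intCast_mem_one_iff]
  push_cast
  have hp : ((p : ℤ) : ℚ) ∈ padicIdeal p 1 := padicIdeal.intCast_mem_one_iff.2 dvd_rfl
  rw [Int.cast_natCast] at hp
  have hmem := add_mem (padicIdeal.antitone one_le_two (sum_range_pow_sub_mem_padicIdeal hk))
    (padicIdeal.mul_mem_of_left hp (bernoulli_mem_padicIdeal hk))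
  rwa [sub_add_cancel] at hmem

end Bernoulli

section WilsonPoly

open Polynomial

theorem mul_coeff_prod_X_add_C_eq_sum {R σ : Type*} [CommRing R] [Fintype σ] (x : σ → R) {k : ℕ}
    (hk : k ≤ Fintype.card σ) :
    (k : R) * (∏ i, (X + C (x i))).coeff (Fintype.card σ - k) = (-1) ^ (k + 1) *
      ∑ a ∈ HasAntidiagonal.antidiagonal k with a.1 < k,
        (-1) ^ a.1 * (∏ i, (X + C (x i))).coeff (Fintype.card σ - a.1) * ∑ i, x i ^ a.2 := by
  have hcoeff : ∀ j ≤ #(univ : Finset σ), (∏ i, (X + C (x i))).coeff (#(univ : Finset σ) - j) =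
      MvPolynomial.aeval x (MvPolynomial.esymm σ R j) := fun j hj => by
    rw [prod_X_add_C_coeff univ x (Nat.sub_le _ _), MvPolynomial.aeval_esymm_eq_multiset_esymm,
      esymm_map_val, Nat.sub_sub_self hj]
  have hnewton := congrArg (MvPolynomial.aeval x) (MvPolynomial.mul_esymm_eq_sum σ R k)
  simp only [map_mul, map_natCast, map_pow, map_neg, map_one, map_sum, MvPolynomial.psum,
    MvPolynomial.aeval_X] at hnewton
  rw [← card_univ] at hk ⊢
  rw [hcoeff k hk, hnewton]
  congr 1
  refine sum_congr rfl fun a ha => ?_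
  rw [hcoeff a.1 ((mem_filter.1 ha).2.le.trans hk)]

/-- The polynomial `(X + 1)(X + 2)⋯(X + p - 1)`, which Wilson's theorem evaluates at `0` modulo a
prime `p`. -/
noncomputable def wilsonPoly (p : ℕ) : ℤ[X] :=
  ∏ i : Fin (p - 1), (X + C ((i : ℤ) + 1))

theorem ascPochhammer_eq_X_mul_wilsonPoly {p : ℕ} (hp : p ≠ 0) :
    ascPochhammer ℤ p = X * wilsonPoly p := by
  obtain ⟨q, rfl⟩ := Nat.exists_eq_succ_of_ne_zero hp
  rw [wilsonPoly, Nat.succ_sub_one]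
  induction q with
  | zero => simp
  | succ q ih =>
    rw [ascPochhammer_succ_right, ih q.succ_ne_zero, Fin.prod_univ_castSucc, mul_assoc]
    simp

theorem ascPochhammer_two_mul_eq {p : ℕ} (hp : p ≠ 0) :
    ascPochhammer ℤ (2 * p) =
      X * ((wilsonPoly p * taylor (p : ℤ) (wilsonPoly p)) * (X + C (p : ℤ))) := by
  rw [two_mul, ← ascPochhammer_mul, ascPochhammer_eq_X_mul_wilsonPoly hp, taylor_apply, mul_comp,
    X_comp, show (C (p : ℤ) : ℤ[X]) = (p : ℤ[X]) by simp]
  ring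

theorem mul_coeff_wilsonPoly_eq_sum {p k : ℕ} (hk : k ≤ p - 1) :
    (k : ℤ) * (wilsonPoly p).coeff (p - 1 - k) = (-1) ^ (k + 1) *
      ∑ a ∈ HasAntidiagonal.antidiagonal k with a.1 < k,
        (-1) ^ a.1 * (wilsonPoly p).coeff (p - 1 - a.1) * ∑ i ∈ range p, (i : ℤ) ^ a.2 := by
  have hnewton := mul_coeff_prod_X_add_C_eq_sum (fun i : Fin (p - 1) => (i : ℤ) + 1)
    (k := k) (by simpa using hk)
  rw [Fintype.card_fin] at hnewton
  rw [wilsonPoly, hnewton]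
  congr 1
  refine sum_congr rfl fun a ha => ?_
  rw [mem_filter, HasAntidiagonal.mem_antidiagonal] at ha
  congr 1
  obtain ⟨q, rfl⟩ := Nat.exists_eq_add_of_le' (show 1 ≤ p by omega)
  rw [sum_range_succ', sum_range]
  simp [show a.2 ≠ 0 by omega]

theorem monic_wilsonPoly (p : ℕ) : (wilsonPoly p).Monic :=
  monic_prod_of_monic _ _ fun _ _ => monic_X_add_C _

theorem coeff_wilsonPoly_sub_one (p : ℕ) : (wilsonPoly p).coeff (p - 1) = 1 := by
  have hdeg : (wilsonPoly p).natDegree = p - 1 := by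
    rw [wilsonPoly, natDegree_prod_of_monic _ _ fun _ _ => monic_X_add_C _]
    simp only [natDegree_X_add_C, sum_const, card_univ, Fintype.card_fin, smul_eq_mul, mul_one]
  rw [← hdeg]
  exact monic_wilsonPoly p

theorem prime_not_dvd_intCast_of_pos_of_lt {p n : ℕ} (hpos : 0 < n) (hlt : n < p) :
    ¬ (p : ℤ) ∣ n := fun h =>
  Nat.not_dvd_of_pos_of_lt hpos hlt (Int.natCast_dvd_natCast.1 h)

variable {p : ℕ} [Fact p.Prime] {k : ℕ}

theorem prime_dvd_coeff_wilsonPoly (hk : 0 < k) (hkp : k + 1 < p) :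
    (p : ℤ) ∣ (wilsonPoly p).coeff k := by
  obtain ⟨j, hj⟩ : ∃ j, j + k = p - 1 := ⟨p - 1 - k, by omega⟩
  have hdvd : (p : ℤ) ∣ (j : ℤ) * (wilsonPoly p).coeff (p - 1 - j) := by
    rw [mul_coeff_wilsonPoly_eq_sum (by omega)]
    refine (dvd_sum fun a ha => ?_).mul_left _
    rw [mem_filter, HasAntidiagonal.mem_antidiagonal] at ha
    exact (prime_dvd_sum_range_pow (by omega)).mul_left _
  rw [show p - 1 - j = k by omega] at hdvd
  exact ((Nat.prime_iff_prime_int.1 Fact.out).dvd_or_dvd hdvd).resolve_left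
    (prime_not_dvd_intCast_of_pos_of_lt (by omega) (by omega))

theorem sq_dvd_mul_coeff_wilsonPoly_sub (hk : 0 < k) (hkp : k + 1 < p) :
    (p : ℤ) ^ 2 ∣ (k + 1) * (wilsonPoly p).coeff k -
      (-1) ^ (p - 1 - k) * ∑ i ∈ range p, (i : ℤ) ^ (p - 1 - k) := by
  obtain ⟨j, hj⟩ : ∃ j, p = k + 1 + j := ⟨p - 1 - k, by omega⟩
  have hjk : p - 1 - k = j := by omega
  have hnewton := mul_coeff_wilsonPoly_eq_sum (p := p) (k := j) (by omega)
  have hmem : (0, j) ∈ (HasAntidiagonal.antidiagonal j).filter fun a => a.1 < j := by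
    simp only [mem_filter, HasAntidiagonal.mem_antidiagonal]
    omega
  rw [← add_sum_erase _ _ hmem, pow_zero, one_mul, Nat.sub_zero, coeff_wilsonPoly_sub_one, one_mul,
    show p - 1 - j = k by omega] at hnewton
  have hrest : (p : ℤ) ^ 2 ∣ ∑ a ∈ ((HasAntidiagonal.antidiagonal j).filter
      fun a => a.1 < j).erase (0, j), (-1) ^ a.1 * (wilsonPoly p).coeff (p - 1 - a.1) *
        ∑ i ∈ range p, (i : ℤ) ^ a.2 := by
    refine dvd_sum fun a ha => ?_
    rw [mem_erase, mem_filter, HasAntidiagonal.mem_antidiagonal] at ha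
    have ha0 : a.1 ≠ 0 := fun h0 => ha.1 (Prod.ext h0 (by omega))
    rw [sq]
    exact mul_dvd_mul ((prime_dvd_coeff_wilsonPoly (by omega) (by omega)).mul_left _)
      (prime_dvd_sum_range_pow (by omega))
  have hp_mul : (p : ℤ) ^ 2 ∣ p * (wilsonPoly p).coeff k := by
    rw [sq]
    exact mul_dvd_mul_left _ (prime_dvd_coeff_wilsonPoly hk hkp)
  have hp_cast : (p : ℤ) = k + 1 + j := mod_cast hj
  have hcombine : (k + 1) * (wilsonPoly p).coeff k -
      (-1) ^ j * ∑ i ∈ range p, (i : ℤ) ^ j = p * (wilsonPoly p).coeff k +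
        (-1) ^ j * ∑ a ∈ ((HasAntidiagonal.antidiagonal j).filter
          fun a => a.1 < j).erase (0, j), (-1) ^ a.1 * (wilsonPoly p).coeff (p - 1 - a.1) *
            ∑ i ∈ range p, (i : ℤ) ^ a.2 := by
    rw [pow_succ] at hnewton
    linear_combination (-(wilsonPoly p).coeff k) * hp_cast - hnewton
  rw [hjk, hcombine]
  exact dvd_add hp_mul (hrest.mul_left _)

theorem mul_coeff_wilsonPoly_sub_bernoulli_mem (hk : 0 < k) (hkp : k + 1 < p) :
    ((k + 1) * (wilsonPoly p).coeff k : ℚ) -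
      (-1) ^ (p - 1 - k) * (p * _root_.bernoulli (p - 1 - k)) ∈ padicIdeal p 2 := by
  have hpowers := padicIdeal.intCast_mem_iff.2 (sq_dvd_mul_coeff_wilsonPoly_sub hk hkp)
  have hfaulhaber := padicIdeal.mul_mem_of_right
    (padicIdeal.intCast_mem_zero (p := p) ((-1) ^ (p - 1 - k)))
    (sum_range_pow_sub_mem_padicIdeal (p := p) (k := p - 1 - k) (by omega))
  push_cast at hpowers hfaulhaber
  convert add_mem hpowers hfaulhaber using 1
  ring

theorem sq_dvd_coeff_wilsonPoly_of_odd (hk : Odd k) (hkp : k + 2 < p) :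
    (p : ℤ) ^ 2 ∣ (wilsonPoly p).coeff k := by
  have hp : Odd p := (Fact.out : p.Prime).odd_of_ne_two (by omega)
  have hodd : Odd (p - 1 - k) := by
    rw [Nat.odd_sub (by omega), Nat.odd_iff, Nat.even_iff]
    rw [Nat.odd_iff] at hp hk
    omega
  have hmem := mul_coeff_wilsonPoly_sub_bernoulli_mem (p := p) hk.pos (by omega)
  rw [bernoulli_eq_zero_of_odd hodd (by omega), mul_zero, mul_zero, sub_zero] at hmem
  have hne : ¬ (p : ℤ) ∣ (k + 1 : ℕ) := prime_not_dvd_intCast_of_pos_of_lt k.succ_pos (by omega)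
  rw [← padicIdeal.intCast_mem_iff, ← padicIdeal.intCast_mul_mem_iff hne]
  exact_mod_cast hmem

end WilsonPoly

section Taylor

open Polynomial

theorem dvd_coeff_taylor_sub_coeff {R : Type*} [CommRing R] {f : R[X]} {c d : R} {k : ℕ}
    (h : ∀ j, 0 < j → d ∣ c ^ j * f.coeff (k + j)) :
    d ∣ (taylor c f).coeff k - f.coeff k := by
  rw [taylor_coeff, eval_eq_sum_range' (Nat.lt_succ_self _), sum_range_succ']
  simp only [hasseDeriv_coeff, zero_add, Nat.choose_self, Nat.cast_one, one_mul, pow_zero, mul_one,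
    add_sub_cancel_right]
  refine dvd_sum fun j _ => ?_
  rw [mul_assoc, mul_comm (f.coeff _), add_comm (j + 1) k]
  exact (h (j + 1) j.succ_pos).mul_left _

variable {p : ℕ} [Fact p.Prime] {k : ℕ}

theorem sq_dvd_coeff_taylor_wilsonPoly_sub (hkp : k + 2 < p) :
    (p : ℤ) ^ 2 ∣ (taylor (p : ℤ) (wilsonPoly p)).coeff k - (wilsonPoly p).coeff k := by
  refine dvd_coeff_taylor_sub_coeff fun j hj => ?_
  obtain rfl | hj2 : j = 1 ∨ 2 ≤ j := by omega
  · rw [pow_one, sq]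
    exact mul_dvd_mul_left _ (prime_dvd_coeff_wilsonPoly k.succ_pos (by omega))
  · exact (pow_dvd_pow _ hj2).mul_right _

theorem cube_dvd_coeff_taylor_wilsonPoly_sub_of_even (hk : Even k) (hkp : k + 3 < p) :
    (p : ℤ) ^ 3 ∣ (taylor (p : ℤ) (wilsonPoly p)).coeff k - (wilsonPoly p).coeff k := by
  refine dvd_coeff_taylor_sub_coeff fun j hj => ?_
  obtain rfl | rfl | hj3 : j = 1 ∨ j = 2 ∨ 3 ≤ j := by omega
  · rw [pow_one, pow_succ' _ 2]
    exact mul_dvd_mul_left _ (sq_dvd_coeff_wilsonPoly_of_odd hk.add_one (by omega))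
  · rw [pow_succ _ 2]
    exact mul_dvd_mul_left _ (prime_dvd_coeff_wilsonPoly (by omega) (by omega))
  · exact (pow_dvd_pow _ hj3).mul_right _

theorem sq_dvd_coeff_taylor_wilsonPoly_of_odd (hk : Odd k) (hkp : k + 2 < p) :
    (p : ℤ) ^ 2 ∣ (taylor (p : ℤ) (wilsonPoly p)).coeff k := by
  rw [← dvd_sub_left (sq_dvd_coeff_wilsonPoly_of_odd hk hkp)]
  exact sq_dvd_coeff_taylor_wilsonPoly_sub hkp

theorem sq_dvd_coeff_wilsonPoly_mul_taylor_of_odd (hk : Odd k) (hkp : k + 2 < p) :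
    (p : ℤ) ^ 2 ∣ (wilsonPoly p * taylor (p : ℤ) (wilsonPoly p)).coeff k := by
  rw [coeff_mul]
  refine dvd_sum fun a ha => ?_
  rw [HasAntidiagonal.mem_antidiagonal] at ha
  rw [← ha] at hk
  obtain h1 | h1 := Nat.even_or_odd a.1
  · exact (sq_dvd_coeff_taylor_wilsonPoly_of_odd ((Nat.odd_add'.1 hk).2 h1) (by omega)).mul_left _
  · exact (sq_dvd_coeff_wilsonPoly_of_odd h1 (by omega)).mul_right _

theorem cube_dvd_coeff_four_wilsonPoly_mul_taylor_sub (hp : 7 < p) :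
    (p : ℤ) ^ 3 ∣ (wilsonPoly p * taylor (p : ℤ) (wilsonPoly p)).coeff 4 -
      2 * (taylor (p : ℤ) (wilsonPoly p)).coeff 0 * (wilsonPoly p).coeff 4 -
      (wilsonPoly p).coeff 2 ^ 2 := by
  have h0 := cube_dvd_coeff_taylor_wilsonPoly_sub_of_even (p := p) (k := 0) (by decide) (by omega)
  have h2 := cube_dvd_coeff_taylor_wilsonPoly_sub_of_even (p := p) (k := 2) (by decide) (by omega)
  have h4 := cube_dvd_coeff_taylor_wilsonPoly_sub_of_even (p := p) (k := 4) (by decide) (by omega)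
  have h1 := sq_dvd_coeff_wilsonPoly_of_odd (p := p) (k := 1) (by decide) (by omega)
  have h3 := sq_dvd_coeff_wilsonPoly_of_odd (p := p) (k := 3) (by decide) (by omega)
  have h1' := sq_dvd_coeff_taylor_wilsonPoly_of_odd (p := p) (k := 1) (by decide) (by omega)
  have h3' := sq_dvd_coeff_taylor_wilsonPoly_of_odd (p := p) (k := 3) (by decide) (by omega)
  generalize wilsonPoly p = φ at *
  generalize taylor (p : ℤ) φ = ψ at *
  have hcube : (p : ℤ) ^ 3 ∣ (p : ℤ) ^ 2 * (p : ℤ) ^ 2 := ⟨p, by ring⟩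
  have hexpand : (φ * ψ).coeff 4 - 2 * ψ.coeff 0 * φ.coeff 4 - φ.coeff 2 ^ 2 =
      φ.coeff 0 * (ψ.coeff 4 - φ.coeff 4) - φ.coeff 4 * (ψ.coeff 0 - φ.coeff 0) +
        φ.coeff 2 * (ψ.coeff 2 - φ.coeff 2) + φ.coeff 1 * ψ.coeff 3 + φ.coeff 3 * ψ.coeff 1 := by
    rw [coeff_mul, Nat.sum_antidiagonal_eq_sum_range_succ_mk]
    simp only [sum_range_succ, sum_range_zero, Nat.reduceSub, zero_add]
    ring
  rw [hexpand]
  exact dvd_add (dvd_add (dvd_add (dvd_sub (h4.mul_left _) (h0.mul_left _)) (h2.mul_left _))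
    (hcube.trans (mul_dvd_mul h1 h3'))) (hcube.trans (mul_dvd_mul h3 h1'))

theorem cube_dvd_coeff_five_wilsonPoly_mul_taylor_mul_sub (hp : 7 < p) :
    (p : ℤ) ^ 3 ∣ (wilsonPoly p * taylor (p : ℤ) (wilsonPoly p) * (X + C (p : ℤ))).coeff 5 -
      2 * (taylor (p : ℤ) (wilsonPoly p)).coeff 0 * (wilsonPoly p).coeff 4 -
      (wilsonPoly p).coeff 2 ^ 2 := by
  have h5 : (p : ℤ) ^ 3 ∣ (wilsonPoly p * taylor (p : ℤ) (wilsonPoly p)).coeff 5 * p := by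
    rw [pow_succ]
    exact mul_dvd_mul_right (sq_dvd_coeff_wilsonPoly_mul_taylor_of_odd (by decide) (by omega)) _
  rw [mul_add, coeff_add, coeff_mul_X, coeff_mul_C, add_sub_right_comm, add_sub_right_comm]
  exact dvd_add (cube_dvd_coeff_four_wilsonPoly_mul_taylor_sub hp) h5

end Taylor

section Values

open Polynomial

variable {p k : ℕ}

theorem factorial_eq_mul_coeff_zero_wilsonPoly (hp : p ≠ 0) :
    (p.factorial : ℤ) = p * (wilsonPoly p).coeff 0 := by
  rw [factorial_eq_mul_coeff_one_ascPochhammer hp, ascPochhammer_eq_X_mul_wilsonPoly hp,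
    coeff_X_mul]

theorem factorial_two_mul_eq_mul_coeff_zero_wilsonPoly (hp : p ≠ 0) :
    ((2 * p).factorial : ℤ) =
      2 * p ^ 2 * ((wilsonPoly p).coeff 0 * (taylor (p : ℤ) (wilsonPoly p)).coeff 0) := by
  rw [factorial_eq_mul_coeff_one_ascPochhammer (mul_ne_zero two_ne_zero hp),
    ascPochhammer_two_mul_eq hp, coeff_X_mul, mul_coeff_zero, mul_coeff_zero, coeff_add,
    coeff_X_zero, coeff_C_zero]
  push_cast
  ring

theorem coeff_zero_wilsonPoly_mul_hsum_self (hp : p ≠ 0) (hk : 0 < k) :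
    ((wilsonPoly p).coeff 0 : ℚ) * (p * hsum p (k + 1) p) =
      (k + 1).factorial * (wilsonPoly p).coeff k := by
  have hsum_eq := factorial_mul_hsum_self (p := p) (k := k + 1) (by omega) (by omega)
  have hfactorial := congrArg (Int.cast : ℤ → ℚ) (factorial_eq_mul_coeff_zero_wilsonPoly hp)
  push_cast at hfactorial
  rw [hfactorial, ascPochhammer_eq_X_mul_wilsonPoly hp, coeff_X_mul] at hsum_eq
  linear_combination hsum_eq

theorem coeff_zero_wilsonPoly_mul_hsum_two_mul (hp : p ≠ 0) (hk : 0 < k) :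
    ((wilsonPoly p).coeff 0 * (taylor (p : ℤ) (wilsonPoly p)).coeff 0 : ℚ) *
        (p ^ 2 * (2 * hsum p (k + 2) (2 * p))) =
      (k + 2).factorial *
        ((wilsonPoly p * taylor (p : ℤ) (wilsonPoly p) * (X + C (p : ℤ))).coeff (k + 1) -
          2 * (taylor (p : ℤ) (wilsonPoly p)).coeff 0 * (wilsonPoly p).coeff k : ℤ) := by
  have hp' : (p : ℚ) ≠ 0 := Nat.cast_ne_zero.2 hp
  have hsum_eq := factorial_mul_hsum_two_mul (p := p) (k := k + 2) (by omega) (by omega)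
  have hself := coeff_zero_wilsonPoly_mul_hsum_self hp hk
  have hfactorial := congrArg (Int.cast : ℤ → ℚ)
    (factorial_two_mul_eq_mul_coeff_zero_wilsonPoly hp)
  have hsucc : ((k + 2).factorial : ℚ) = (k + 2) * (k + 1).factorial := mod_cast rfl
  have hcancel : (p : ℚ) ^ 2 * ((k + 2) / p * hsum p (k + 1) p) =
      (k + 2) * (p * hsum p (k + 1) p) := by
    field_simp
  push_cast at hfactorial
  rw [hfactorial, ascPochhammer_two_mul_eq hp, coeff_X_mul, show k + 2 - 1 = k + 1 from rfl]
    at hsum_eq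
  push_cast at hsum_eq ⊢
  linear_combination hsum_eq - 2 * (wilsonPoly p).coeff 0 *
      (taylor (p : ℤ) (wilsonPoly p)).coeff 0 * hcancel -
    2 * (taylor (p : ℤ) (wilsonPoly p)).coeff 0 * (k + 2) * hself +
    2 * (taylor (p : ℤ) (wilsonPoly p)).coeff 0 * (wilsonPoly p).coeff k * hsucc

variable [Fact p.Prime]

theorem prime_dvd_coeff_zero_wilsonPoly_add_one : (p : ℤ) ∣ (wilsonPoly p).coeff 0 + 1 := by
  have hp : p ≠ 0 := (Fact.out : p.Prime).ne_zero
  have hcoeff : (wilsonPoly p).coeff 0 = ((p - 1).factorial : ℕ) := by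
    refine mul_left_cancel₀ (Nat.cast_ne_zero.2 hp : (p : ℤ) ≠ 0) ?_
    rw [← factorial_eq_mul_coeff_zero_wilsonPoly hp, ← Nat.mul_factorial_pred hp, Nat.cast_mul]
  rw [← ZMod.intCast_zmod_eq_zero_iff_dvd, hcoeff]
  push_cast
  rw [ZMod.wilsons_lemma, neg_add_cancel]

theorem prime_dvd_coeff_zero_wilsonPoly_mul_taylor_sub_one (hp : 2 < p) :
    (p : ℤ) ∣ (wilsonPoly p).coeff 0 * (taylor (p : ℤ) (wilsonPoly p)).coeff 0 - 1 := by
  have hwilson := prime_dvd_coeff_zero_wilsonPoly_add_one (p := p)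
  have htaylor := (dvd_pow_self (p : ℤ) two_ne_zero).trans
    (sq_dvd_coeff_taylor_wilsonPoly_sub (p := p) (k := 0) hp)
  obtain ⟨s, hs⟩ := htaylor
  obtain ⟨t, ht⟩ := hwilson
  exact ⟨(wilsonPoly p).coeff 0 * s + ((wilsonPoly p).coeff 0 - 1) * t,
    by linear_combination (wilsonPoly p).coeff 0 * hs + ((wilsonPoly p).coeff 0 - 1) * ht⟩

theorem hsum_self_mem_padicIdeal_of_odd (hk : Odd k) (hkp : k + 2 < p) :
    hsum p (k + 1) p ∈ padicIdeal p 1 := by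
  have hp : p.Prime := Fact.out
  have hunit : ¬ (p : ℤ) ∣ (wilsonPoly p).coeff 0 := fun h =>
    (Nat.prime_iff_prime_int.1 hp).not_dvd_one
      ((dvd_add_right h).1 prime_dvd_coeff_zero_wilsonPoly_add_one)
  have hcoeff := padicIdeal.mul_mem_of_right (padicIdeal.natCast_mem_zero (k + 1).factorial)
    (padicIdeal.intCast_mem_iff.2 (sq_dvd_coeff_wilsonPoly_of_odd hk hkp))
  rw [← coeff_zero_wilsonPoly_mul_hsum_self hp.ne_zero hk.pos,
    padicIdeal.intCast_mul_mem_iff hunit] at hcoeff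
  rwa [← padicIdeal.pow_mul_mem_iff (l := 1), pow_one]

theorem nine_mul_sq_coeff_two_wilsonPoly_sub_mem (hp : 3 < p) :
    9 * ((wilsonPoly p).coeff 2 : ℚ) ^ 2 - p ^ 2 * _root_.bernoulli (p - 3) ^ 2 ∈
      padicIdeal p 3 := by
  have hsub := mul_coeff_wilsonPoly_sub_bernoulli_mem (p := p) (k := 2) two_pos hp
  rw [Even.neg_one_pow ((Fact.out : p.Prime).even_sub_one (by omega) |>.tsub even_two), one_mul,
    Nat.sub_sub] at hsub
  have hcoeff := padicIdeal.intCast_mem_one_iff.2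
    (prime_dvd_coeff_wilsonPoly (p := p) two_pos hp)
  have hadd := sub_mem (padicIdeal.mul_mem_of_right (padicIdeal.natCast_mem_zero 6) hcoeff)
    (padicIdeal.antitone one_le_two hsub)
  convert padicIdeal.mul_mem hsub hadd using 1
  push_cast
  ring

theorem wilsonPoly_mul_hsum_six_two_mul_sub_mem (hp : 7 < p) :
    (((wilsonPoly p).coeff 0 * (taylor (p : ℤ) (wilsonPoly p)).coeff 0 : ℤ) : ℚ) *
      (2 * hsum p 6 (2 * p)) - 80 * _root_.bernoulli (p - 3) ^ 2 ∈ padicIdeal p 1 := by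
  have hbracket := padicIdeal.mul_mem_of_right (padicIdeal.natCast_mem_zero 720)
    (padicIdeal.intCast_mem_iff.2 (cube_dvd_coeff_five_wilsonPoly_mul_taylor_mul_sub hp))
  have hsquare := padicIdeal.mul_mem_of_right (padicIdeal.natCast_mem_zero 80)
    (nine_mul_sq_coeff_two_wilsonPoly_sub_mem (p := p) (by omega))
  have hvalue := coeff_zero_wilsonPoly_mul_hsum_two_mul (p := p) (k := 4) (by omega) (by omega)
  rw [show (Nat.factorial (4 + 2) : ℚ) = 720 by norm_num [Nat.factorial]] at hvalue
  rw [← padicIdeal.pow_mul_mem_iff (l := 2), Int.cast_mul]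
  convert add_mem hbracket hsquare using 1
  push_cast at hvalue ⊢
  linear_combination hvalue

theorem hsum_six_two_mul_sub_mem_padicIdeal (hp : 7 < p) :
    hsum p 6 (2 * p) - 40 * _root_.bernoulli (p - 3) ^ 2 ∈ padicIdeal p 1 := by
  set u := (wilsonPoly p).coeff 0 * (taylor (p : ℤ) (wilsonPoly p)).coeff 0 with hu
  have hvalue := wilsonPoly_mul_hsum_six_two_mul_sub_mem hp
  rw [← hu] at hvalue
  have hu_one : (p : ℤ) ∣ u - 1 :=
    prime_dvd_coeff_zero_wilsonPoly_mul_taylor_sub_one (p := p) (by omega)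
  have hunit : ¬ (p : ℤ) ∣ u * 2 := fun h => by
    have htwo : ¬ (p : ℤ) ∣ (2 : ℕ) := prime_not_dvd_intCast_of_pos_of_lt two_pos (by omega)
    refine htwo ((dvd_sub_right h).1 ?_)
    simpa [sub_mul] using hu_one.mul_right 2
  have hB : _root_.bernoulli (p - 3) ∈ padicIdeal p 0 := bernoulli_mem_padicIdeal (by omega)
  have hB_sq := padicIdeal.mul_mem_of_right (padicIdeal.natCast_mem_zero 80)
    (padicIdeal.mul_mem_of_left hB hB)
  rw [← padicIdeal.intCast_mul_mem_iff hunit]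
  convert sub_mem hvalue (padicIdeal.mul_mem_of_left
    (padicIdeal.intCast_mem_one_iff.2 hu_one) hB_sq) using 1
  push_cast
  ring

end Values

section Newton

open PowerSeries in
theorem coeff_X_pow_mul_mk_one_pow (n e k : ℕ) :
    coeff n ((X : ℤ⟦X⟧) ^ e * (PowerSeries.mk 1 : ℤ⟦X⟧) ^ (e + k + 1)) =
      ((n + k).choose (e + k) : ℕ) := by
  rw [coeff_X_pow_mul', mk_one_pow_eq_mk_choose_add, coeff_mk]
  split_ifs with h
  · rw [show e + k + (n - e) = n + k by omega]
  · rw [Nat.choose_eq_zero_of_lt (by omega), Nat.cast_zero]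

open PowerSeries in
theorem sum_piAntidiag_prod_choose {k : ℕ} (e : Fin (k + 1) → ℕ) (n : ℕ) :
    ∑ y ∈ piAntidiag univ n, ∏ i, (y i).choose (e i) = (n + k).choose (∑ i, e i + k) := by
  have hprod : ∏ i, (X : ℤ⟦X⟧) ^ e i * (PowerSeries.mk 1 : ℤ⟦X⟧) ^ (e i + 1) =
      X ^ (∑ i, e i) * (PowerSeries.mk 1 : ℤ⟦X⟧) ^ (∑ i, e i + k + 1) := by
    rw [prod_mul_distrib, prod_pow_eq_pow_sum, prod_pow_eq_pow_sum, sum_add_distrib]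
    simp [add_assoc]
  have hcoeff := congrArg (coeff n) hprod
  rw [coeff_prod_univ_eq_sum_piAntidiag, coeff_X_pow_mul_mk_one_pow] at hcoeff
  have hfactor (i : Fin (k + 1)) (m : ℕ) :
      coeff m ((X : ℤ⟦X⟧) ^ e i * (PowerSeries.mk 1 : ℤ⟦X⟧) ^ (e i + 1)) = (m.choose (e i) : ℕ) :=
    coeff_X_pow_mul_mk_one_pow m (e i) 0
  simp only [hfactor] at hcoeff
  exact_mod_cast hcoeff

theorem sum_piAntidiag_prod_eq_sum_fwdDiff_iter {R : Type*} [CommRing R] {k : ℕ}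
    (f : Fin (k + 1) → ℕ → R) (n : ℕ) :
    ∑ y ∈ piAntidiag univ n, ∏ i, f i (y i) =
      ∑ e ∈ Fintype.piFinset fun _ : Fin (k + 1) => range (n + 1),
        ((n + k).choose (∑ i, e i + k) : R) * ∏ i, (fwdDiff 1)^[e i] (f i) 0 := by
  have hexpand : ∀ y ∈ piAntidiag (univ : Finset (Fin (k + 1))) n, ∏ i, f i (y i) =
      ∑ e ∈ Fintype.piFinset fun _ : Fin (k + 1) => range (n + 1),
        ((∏ i, (y i).choose (e i) : ℕ) : R) * ∏ i, (fwdDiff 1)^[e i] (f i) 0 := fun y hy => by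
    simp only [Nat.cast_prod, ← prod_mul_distrib]
    rw [← prod_univ_sum (fun _ => range (n + 1))
      fun i j => ((y i).choose j : R) * (fwdDiff 1)^[j] (f i) 0]
    refine prod_congr rfl fun i _ => ?_
    have hle : y i ≤ n := (mem_piAntidiag.1 hy).1 ▸
      single_le_sum (fun _ _ => Nat.zero_le _) (mem_univ i)
    have hnewton := shift_eq_sum_fwdDiff_iter 1 (f i) (y i) 0
    simp only [smul_eq_mul, mul_one, zero_add, nsmul_eq_mul] at hnewton
    rw [hnewton]
    refine sum_subset (range_subset_range.2 (by omega)) fun j _ hj => ?_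
    rw [Nat.choose_eq_zero_of_lt (by simpa using hj), Nat.cast_zero, zero_mul]
  rw [sum_congr rfl hexpand, sum_comm]
  refine sum_congr rfl fun e _ => ?_
  rw [← sum_mul, ← Nat.cast_sum, sum_piAntidiag_prod_choose]

theorem fwdDiff_iter_inv_add_mul {K : Type*} [Field K] {c x : K} (h : ∀ n : ℕ, x + c * n ≠ 0)
    (j n : ℕ) :
    (fwdDiff 1)^[j] (fun n : ℕ => (x + c * n)⁻¹) n =
      (-c) ^ j * j.factorial * (∏ i ∈ range (j + 1), (x + c * (n + i : ℕ)))⁻¹ := by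
  induction j generalizing n with
  | zero => simp
  | succ j ih =>
    have hshift : ∏ i ∈ range (j + 1), (x + c * (n + 1 + i : ℕ)) =
        (∏ i ∈ range (j + 1 + 1), (x + c * (n + i : ℕ))) * (x + c * n)⁻¹ := by
      rw [prod_range_succ' _ (j + 1), add_zero, mul_inv_cancel_right₀ (h n)]
      simp only [add_assoc, add_comm 1]
    have hlast : ∏ i ∈ range (j + 1), (x + c * (n + i : ℕ)) =
        (∏ i ∈ range (j + 1 + 1), (x + c * (n + i : ℕ))) * (x + c * (n + (j + 1) : ℕ))⁻¹ := by
      rw [prod_range_succ _ (j + 1), mul_inv_cancel_right₀ (h _)]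
    rw [Function.iterate_succ_apply', fwdDiff, ih, ih, hshift, hlast, mul_inv, mul_inv, inv_inv,
      inv_inv, Nat.factorial_succ]
    push_cast
    ring

variable {p : ℕ} [Fact p.Prime]

theorem fwdDiff_iter_inv_add_prime_mul_mem {x : ℕ} (hx : ¬ p ∣ x) (j : ℕ) :
    (fwdDiff 1)^[j] (fun n : ℕ => ((x : ℚ) + p * n)⁻¹) 0 ∈ padicIdeal p j := by
  have hunit : ∀ n : ℕ, ¬ p ∣ x + p * n := fun n h => hx ((Nat.dvd_add_left ⟨n, rfl⟩).1 h)
  have hne : ∀ n : ℕ, (x : ℚ) + p * n ≠ 0 := fun n h =>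
    hunit n ((show x + p * n = 0 from mod_cast h) ▸ dvd_zero p)
  rw [fwdDiff_iter_inv_add_mul hne, ← prod_inv_distrib]
  refine padicIdeal.mul_mem_of_left (padicIdeal.mul_mem_of_left ?_ (padicIdeal.natCast_mem_zero _))
    (padicIdeal.prod_mem_zero fun i _ => ?_)
  · exact mod_cast padicIdeal.intCast_mem_iff.2
      (pow_dvd_pow_of_dvd ((dvd_neg (a := (p : ℤ))).2 dvd_rfl) j)
  · exact mod_cast padicIdeal.inv_natCast_mem_zero (hunit (0 + i))

theorem sum_piAntidiag_prod_sub_mem_padicIdeal {k r n : ℕ} {f : Fin (k + 1) → ℕ → ℚ}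
    (hf : ∀ i j, (fwdDiff 1)^[j] (f i) 0 ∈ padicIdeal p j)
    (hchoose : ∀ j, 0 < j → p ^ r ∣ p ^ j * (n + k).choose (j + k)) :
    ∑ y ∈ piAntidiag univ n, ∏ i, f i (y i) - (n + k).choose k * ∏ i, f i 0 ∈ padicIdeal p r := by
  have hzero : (0 : Fin (k + 1) → ℕ) ∈ Fintype.piFinset fun _ => range (n + 1) := by simp
  rw [sum_piAntidiag_prod_eq_sum_fwdDiff_iter, ← add_sum_erase _ _ hzero]
  simp only [Pi.zero_apply, sum_const_zero, zero_add, Function.iterate_zero, id_eq,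
    add_sub_cancel_left]
  refine sum_mem fun e he => ?_
  have hpos : 0 < ∑ i, e i := Nat.pos_of_ne_zero fun h => (mem_erase.1 he).1 <| funext fun i =>
    sum_eq_zero_iff.1 h i (mem_univ i)
  have hmem := padicIdeal.prod_mem (s := univ) fun i _ => hf i (e i)
  rw [← padicIdeal.pow_mul_mem_iff (l := ∑ i, e i)]
  have hcoeff : (p : ℤ) ^ r ∣ _ := Int.natCast_dvd_natCast.2 (hchoose _ hpos)
  have hmul := padicIdeal.mul_mem (padicIdeal.intCast_mem_iff.2 hcoeff) hmem
  rw [← mul_assoc, add_comm _ r]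
  exact mod_cast hmul

end Newton

section Reduction

theorem pow_succ_dvd_pow_mul_choose {p r m J u : ℕ} (hp : p.Prime) (h : p ^ r ∣ m) (hu : 0 < u)
    (huJ : u < p ^ J) : p ^ (r + 1) ∣ p ^ J * m.choose u := by
  obtain ⟨e, v, hv, rfl⟩ := Nat.exists_eq_pow_mul_and_not_dvd hu.ne' p hp.ne_one
  have heJ : e < J := (Nat.pow_lt_pow_iff_right hp.one_lt).1
    ((Nat.le_of_dvd hu ⟨v, rfl⟩).trans_lt huJ)
  have habsorb : p ^ r ∣ p ^ e * v * m.choose (p ^ e * v) := by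
    obtain ⟨w, hw⟩ := Nat.exists_eq_add_one.2 hu
    rcases m with _ | m
    · simp [hw]
    · rw [hw, mul_comm, ← Nat.add_one_mul_choose_eq]
      exact h.mul_right _
  have hcancel : p ^ r ∣ p ^ e * m.choose (p ^ e * v) :=
    (((hp.coprime_iff_not_dvd).2 hv).pow_left r).dvd_of_dvd_mul_left (by
      rwa [mul_right_comm, mul_comm] at habsorb)
  calc p ^ (r + 1) ∣ p ^ e * m.choose (p ^ e * v) * p := mul_dvd_mul_right hcancel p
    _ = p ^ (e + 1) * m.choose (p ^ e * v) := by ring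
    _ ∣ p ^ J * m.choose (p ^ e * v) := mul_dvd_mul_right (pow_dvd_pow p heJ) _

theorem pow_succ_dvd_pow_mul_choose_add {p r m s J u : ℕ} (hp : p.Prime) (h : p ^ r ∣ m)
    (hsu : s < u) (huJ : u < p ^ J) : p ^ (r + 1) ∣ p ^ J * (m + s).choose u := by
  rw [Nat.add_choose_eq, mul_sum]
  refine dvd_sum fun ij hij => ?_
  rw [HasAntidiagonal.mem_antidiagonal] at hij
  rcases Nat.eq_zero_or_pos ij.1 with hi | hi
  · rw [Nat.choose_eq_zero_of_lt (show s < ij.2 by omega)]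
    simp
  · rw [← mul_assoc]
    exact (pow_succ_dvd_pow_mul_choose hp h hi (by omega)).mul_right _

theorem add_lt_pow {p j k : ℕ} (hj : 0 < j) (hk : k + 1 < p) : j + k < p ^ j := by
  induction j, hj using Nat.le_induction with
  | base => rwa [pow_one, add_comm]
  | succ j _ ih =>
    calc j + 1 + k ≤ p ^ j := by omega
      _ < p ^ (j + 1) := Nat.pow_lt_pow_succ (by omega)

/-- The sum `H_a` of `1 / (u₁ ⋯ uₖ)` over the `k`-tuples with entries in `{1, …, p - 1}` and sum
`a * p`. The tuples are indexed by their residues, on which `(ZMod p)ˣ` acts by scaling. -/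
def residueSum (p k a : ℕ) [NeZero p] : ℚ :=
  ∑ u : Fin k → ZMod p with (∀ i, u i ≠ 0) ∧ ∑ i, (u i).val = a * p, ∏ i, ((u i).val : ℚ)⁻¹

theorem not_dvd_val_of_ne_zero {p : ℕ} [NeZero p] {x : ZMod p} (hx : x ≠ 0) : ¬ p ∣ x.val :=
  fun h => hx ((ZMod.val_eq_zero x).1 (Nat.eq_zero_of_dvd_of_lt h x.val_lt))

theorem hsum_mul_eq_sum_antidiagonal (p k m : ℕ) [NeZero p] :
    hsum p k (p * m) = ∑ a ∈ HasAntidiagonal.antidiagonal m,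
      ∑ u : Fin k → ZMod p with (∀ i, u i ≠ 0) ∧ ∑ i, (u i).val = a.1 * p,
        ∑ y ∈ piAntidiag univ a.2, ∏ i, (((u i).val : ℚ) + p * y i)⁻¹ := by
  have hp := Nat.pos_of_neZero p
  simp only [← sum_product', hsum_eq_sum_piAntidiag, one_div]
  rw [sum_sigma']
  refine sum_nbij' (fun l => ⟨((∑ i, l i % p) / p, ∑ i, l i / p), fun i => l i, fun i => l i / p⟩)
    (fun x i => (x.2.1 i).val + p * x.2.2 i) (fun l hl => ?_) ?_ ?_ ?_ ?_
  · simp only [mem_filter, mem_piAntidiag, mem_univ, implies_true, and_true] at hl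
    have hsplit : ∑ i, l i % p + p * ∑ i, l i / p = p * m := by
      simp only [mul_sum, ← sum_add_distrib, Nat.mod_add_div, hl.1]
    obtain ⟨a, ha⟩ := (Nat.dvd_add_left ⟨_, rfl⟩).1 (Dvd.intro m hsplit.symm)
    have ham : a + ∑ i, l i / p = m := Nat.eq_of_mul_eq_mul_left hp (by rw [← hsplit, ha, mul_add])
    simp [ha, ham, hl.2, ZMod.natCast_eq_zero_iff, hp, mul_comm a]
  · rintro ⟨a, u, y⟩ hx
    simp only [mem_sigma, HasAntidiagonal.mem_antidiagonal, mem_product, mem_filter, mem_univ,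
      true_and, mem_piAntidiag, implies_true, and_true] at hx ⊢
    refine ⟨?_, fun i => ?_⟩
    · rw [sum_add_distrib, ← mul_sum, hx.2.1.2, hx.2.2, ← hx.1, mul_comm, mul_add]
    · rw [Nat.dvd_add_left ⟨_, rfl⟩]
      exact not_dvd_val_of_ne_zero (hx.2.1.1 i)
  · intro l _
    simp [Nat.mod_add_div]
  · rintro ⟨a, u, y⟩ hx
    simp only [mem_sigma, mem_product, mem_filter, mem_piAntidiag] at hx
    simp [Nat.add_mul_div_left _ _ hp, Nat.mod_eq_of_lt (ZMod.val_lt _),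
      Nat.div_eq_of_lt (ZMod.val_lt _), hx.2.1.2.2, hx.2.2.1, hp]
  · intro l _
    refine prod_congr rfl fun i _ => ?_
    rw [ZMod.val_natCast, ← Nat.cast_mul, ← Nat.cast_add, Nat.mod_add_div]

theorem mem_Icc_of_sum_val_eq {p k a : ℕ} [NeZero p] {u : Fin (k + 1) → ZMod p}
    (hne : ∀ i, u i ≠ 0) (hu : ∑ i, (u i).val = a * p) : a ∈ Icc 1 k := by
  have hpos : 0 < a * p := hu ▸ sum_pos
    (fun i _ => Nat.pos_of_ne_zero ((ZMod.val_ne_zero (u i)).2 (hne i))) univ_nonempty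
  have hlt : a * p < (k + 1) * p :=
    calc a * p < ∑ _ : Fin (k + 1), p :=
          hu ▸ sum_lt_sum_of_nonempty univ_nonempty fun i _ => ZMod.val_lt (u i)
      _ = (k + 1) * p := by simp
  exact mem_Icc.2 ⟨Nat.pos_of_mul_pos_right hpos,
    Nat.le_of_lt_succ (Nat.lt_of_mul_lt_mul_right hlt)⟩

theorem residueSum_eq_zero {p k a : ℕ} [NeZero p] (ha : a ∉ Icc 1 k) :
    residueSum p (k + 1) a = 0 :=
  sum_eq_zero fun _ hu => absurd
    (mem_Icc_of_sum_val_eq (mem_filter.1 hu).2.1 (mem_filter.1 hu).2.2) ha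

theorem sum_antidiagonal_choose_mul_residueSum (p k m : ℕ) [NeZero p] :
    ∑ a ∈ HasAntidiagonal.antidiagonal m, ((a.2 + k).choose k : ℚ) * residueSum p (k + 1) a.1 =
      ∑ a ∈ Icc 1 k, ((m + k - a).choose k : ℚ) * residueSum p (k + 1) a := by
  rw [Nat.sum_antidiagonal_eq_sum_range_succ_mk]
  refine sum_congr_of_eq_on_inter (fun a _ hak => ?_) (fun a ha ham => ?_) fun a ha hak => ?_
  · rw [residueSum_eq_zero hak, mul_zero]
  · rw [mem_Icc] at ha
    rw [mem_range] at ham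
    rw [Nat.choose_eq_zero_of_lt (by omega), Nat.cast_zero, zero_mul]
  · rw [mem_range] at ha
    rw [show m - a + k = m + k - a by omega]

variable {p : ℕ} [Fact p.Prime]

theorem hsum_mul_sub_mem_padicIdeal {k r m : ℕ} (hk : k + 1 < p) (h : p ^ r ∣ m) :
    hsum p (k + 1) (p * m) - ∑ a ∈ Icc 1 k, ((m + k - a).choose k : ℚ) * residueSum p (k + 1) a ∈
      padicIdeal p (r + 1) := by
  rw [← sum_antidiagonal_choose_mul_residueSum, hsum_mul_eq_sum_antidiagonal, ← sum_sub_distrib]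
  refine sum_mem fun a ha => ?_
  rw [residueSum, mul_sum, ← sum_sub_distrib]
  refine sum_mem fun u hu => ?_
  obtain ⟨hne, hu⟩ := (mem_filter.1 hu).2
  have hbounds := mem_Icc.1 (mem_Icc_of_sum_val_eq hne hu)
  have hat : a.2 + k = m + (k - a.1) := by
    rw [← HasAntidiagonal.mem_antidiagonal.1 ha]
    omega
  have hmod := sum_piAntidiag_prod_sub_mem_padicIdeal (p := p) (r := r + 1) (n := a.2)
    (f := fun i (j : ℕ) => (((u i).val : ℚ) + p * j)⁻¹)
    (fun i => fwdDiff_iter_inv_add_prime_mul_mem (not_dvd_val_of_ne_zero (hne i))) fun j hj => by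
      rw [hat]
      exact pow_succ_dvd_pow_mul_choose_add Fact.out h (by omega) (add_lt_pow hj hk)
  simpa using hmod

end Reduction

section Symmetry

variable {p k : ℕ} [Fact p.Prime]

theorem intCast_mul_inv_sub_inv_mem {c : ℤ} {m n : ℕ} (hm : ¬ p ∣ m) (hn : ¬ p ∣ n)
    (h : (p : ℤ) ∣ c * n - m) : (c : ℚ) * (m : ℚ)⁻¹ - (n : ℚ)⁻¹ ∈ padicIdeal p 1 := by
  have hm0 : (m : ℚ) ≠ 0 := Nat.cast_ne_zero.2 fun h0 => hm (h0 ▸ dvd_zero p)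
  have hn0 : (n : ℚ) ≠ 0 := Nat.cast_ne_zero.2 fun h0 => hn (h0 ▸ dvd_zero p)
  have hsplit : (c : ℚ) * (m : ℚ)⁻¹ - (n : ℚ)⁻¹ =
      ((c * n - m : ℤ) : ℚ) * ((m : ℚ)⁻¹ * (n : ℚ)⁻¹) := by
    push_cast
    field_simp
  rw [hsplit]
  exact padicIdeal.mul_mem_of_left (padicIdeal.intCast_mem_one_iff.2 h)
    (padicIdeal.mul_mem_of_left (padicIdeal.inv_natCast_mem_zero hm)
      (padicIdeal.inv_natCast_mem_zero hn))

theorem pow_mul_prod_inv_val_sub_mem {c : ℤ} {u : Fin k → ZMod p} (hc : (c : ZMod p) ≠ 0)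
    (hu : ∀ i, u i ≠ 0) :
    (c : ℚ) ^ k * ∏ i, ((c * u i : ZMod p).val : ℚ)⁻¹ - ∏ i, ((u i).val : ℚ)⁻¹ ∈
      padicIdeal p 1 := by
  rw [← Fin.prod_const, ← prod_mul_distrib]
  refine padicIdeal.prod_sub_prod_mem (fun i _ => ?_) (fun i _ => ?_) fun i _ => ?_
  · exact padicIdeal.mul_mem_of_left (padicIdeal.intCast_mem_zero c)
      (padicIdeal.inv_natCast_mem_zero (not_dvd_val_of_ne_zero (mul_ne_zero hc (hu i))))
  · exact padicIdeal.inv_natCast_mem_zero (not_dvd_val_of_ne_zero (hu i))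
  · refine intCast_mul_inv_sub_inv_mem (not_dvd_val_of_ne_zero (mul_ne_zero hc (hu i)))
      (not_dvd_val_of_ne_zero (hu i)) ?_
    rw [← ZMod.intCast_zmod_eq_zero_iff_dvd]
    simp

theorem neg_one_pow_mul_residueSum_sub_mem {a b : ℕ} (hab : a + b = k) :
    (-1) ^ k * residueSum p k b - residueSum p k a ∈ padicIdeal p 1 := by
  have hval {a b : ℕ} (hab : a + b = k) {u : Fin k → ZMod p}
      (hu : (∀ i, u i ≠ 0) ∧ ∑ i, (u i).val = a * p) :
      (∀ i, -u i ≠ 0) ∧ ∑ i, (-u i).val = b * p := by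
    refine ⟨fun i => neg_ne_zero.2 (hu.1 i), ?_⟩
    have hadd : ∑ i, ((-u i).val + (u i).val) = k * p := by
      simp [ZMod.neg_val, hu.1, Nat.sub_add_cancel (ZMod.val_lt _).le]
    rw [sum_add_distrib, hu.2] at hadd
    have hmul : k * p = a * p + b * p := by rw [← hab, add_mul]
    omega
  have hreflect : residueSum p k b = ∑ u : Fin k → ZMod p with
      (∀ i, u i ≠ 0) ∧ ∑ i, (u i).val = a * p, ∏ i, ((-u i).val : ℚ)⁻¹ :=
    sum_nbij' (fun u => -u) (fun u => -u)
      (by simpa using fun u => hval (b := a) (by omega)) (by simpa using fun u => hval hab)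
      (by simp) (by simp) (by simp)
  rw [hreflect, residueSum, mul_sum, ← sum_sub_distrib]
  refine sum_mem fun u hu => ?_
  simpa using pow_mul_prod_inv_val_sub_mem (c := -1) (by simp) (mem_filter.1 hu).2.1

theorem sum_residueSum_eq (p k : ℕ) [NeZero p] : ∑ a ∈ Icc 1 k, residueSum p (k + 1) a =
    ∑ u : Fin (k + 1) → ZMod p with (∀ i, u i ≠ 0) ∧ ∑ i, u i = 0, ∏ i, ((u i).val : ℚ)⁻¹ := by
  have hp := Nat.pos_of_neZero p
  have hdvd (u : Fin (k + 1) → ZMod p) : ∑ i, u i = 0 ↔ p ∣ ∑ i, (u i).val := by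
    rw [← ZMod.natCast_eq_zero_iff]
    simp
  rw [← sum_fiberwise_of_maps_to (t := Icc 1 k)
    (g := fun u : Fin (k + 1) → ZMod p => (∑ i, (u i).val) / p) fun u hu => ?_]
  · refine sum_congr rfl fun a _ => sum_congr ?_ fun _ _ => rfl
    ext u
    simp only [filter_filter, mem_filter, mem_univ, true_and, and_assoc, hdvd]
    refine and_congr_right fun _ => ⟨fun h => ?_, fun h => ?_⟩
    · rw [h]
      exact ⟨Dvd.intro_left a rfl, Nat.mul_div_cancel a hp⟩
    · rw [← h.2, Nat.div_mul_cancel h.1]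
  · simp only [mem_filter, mem_univ, true_and, hdvd] at hu
    exact mem_Icc_of_sum_val_eq hu.1 (Nat.div_mul_cancel hu.2).symm

theorem sum_residueSum_mem_padicIdeal (hk : ¬ p - 1 ∣ k + 1) :
    ∑ a ∈ Icc 1 k, residueSum p (k + 1) a ∈ padicIdeal p 1 := by
  rw [← ZMod.card p, ← FiniteField.forall_pow_eq_one_iff, not_forall] at hk
  obtain ⟨x, hx⟩ := hk
  set c : ℤ := ((x : ZMod p).val : ℤ) with hc
  have hcx : (c : ZMod p) = x := by simp [hc]
  have hc0 : (c : ZMod p) ≠ 0 := hcx ▸ x.ne_zero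
  have hcunit : ¬ (p : ℤ) ∣ c ^ (k + 1) - 1 := by
    rw [← ZMod.intCast_zmod_eq_zero_iff_dvd, Int.cast_sub, Int.cast_pow, hcx, Int.cast_one,
      sub_eq_zero]
    exact fun h => hx (Units.ext (by simpa using h))
  have hscale : ∑ u : Fin (k + 1) → ZMod p with (∀ i, u i ≠ 0) ∧ ∑ i, u i = 0,
      ∏ i, ((u i).val : ℚ)⁻¹ = ∑ u : Fin (k + 1) → ZMod p with (∀ i, u i ≠ 0) ∧ ∑ i, u i = 0,
      ∏ i, ((c * u i : ZMod p).val : ℚ)⁻¹ := by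
    refine (sum_equiv (MulAction.toPerm x) (fun u => ?_) fun u _ => ?_).symm
    · simp [Units.smul_def, ← mul_sum]
    · simp [hcx, Units.smul_def]
  rw [← padicIdeal.intCast_mul_mem_iff hcunit, Int.cast_sub, Int.cast_pow, Int.cast_one, sub_mul,
    one_mul, sum_residueSum_eq, mul_sum]
  nth_rw 1 [← mul_sum, hscale, mul_sum]
  rw [← sum_sub_distrib]
  exact sum_mem fun u hu => pow_mul_prod_inv_val_sub_mem hc0 (mem_filter.1 hu).2.1

end Symmetry

section Assembly

open Polynomial in
theorem sq_dvd_factorial_mul_choose_sub (m s t : ℕ) :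
    (m : ℤ) ^ 2 ∣ (s + t + 1).factorial * (m + s).choose (s + t + 1) -
      (-1) ^ t * t.factorial * s.factorial * m := by
  have hchoose : ((s + t + 1).factorial * (m + s).choose (s + t + 1) : ℤ) =
      (descPochhammer ℤ s).eval ((m + s : ℕ) : ℤ) *
        (m * (descPochhammer ℤ t).eval ((m : ℤ) - 1)) := by
    rw [← Nat.cast_mul, ← Nat.descFactorial_eq_factorial_mul_choose,
      ← descPochhammer_eval_eq_descFactorial ℤ, add_assoc, ← descPochhammer_mul,
      descPochhammer_succ_left]
    simp
  have hs : (m : ℤ) ∣ (descPochhammer ℤ s).eval ((m + s : ℕ) : ℤ) - s.factorial := by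
    have h := sub_dvd_eval_sub ((m + s : ℕ) : ℤ) s (descPochhammer ℤ s)
    rwa [descPochhammer_eval_eq_descFactorial ℤ s s, Nat.descFactorial_self, Nat.cast_add,
      add_sub_cancel_right, ← Nat.cast_add] at h
  have ht : (m : ℤ) ∣ (descPochhammer ℤ t).eval ((m : ℤ) - 1) - (-1) ^ t * t.factorial := by
    have hneg : (descPochhammer ℤ t).eval (-1) = (-1) ^ t * t.factorial := by
      rw [← ascPochhammer_eval_one ℤ t, ← neg_neg (1 : ℤ), ascPochhammer_eval_neg_eq_descPochhammer,
        neg_neg, ← mul_assoc, ← mul_pow]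
      simp
    have h := sub_dvd_eval_sub ((m : ℤ) - 1) (-1) (descPochhammer ℤ t)
    rwa [hneg, sub_neg_eq_add, sub_add_cancel] at h
  rw [hchoose]
  obtain ⟨v, hv⟩ := hs
  obtain ⟨w, hw⟩ := ht
  rw [sub_eq_iff_eq_add] at hv hw
  rw [hv, hw]
  exact ⟨v * m * w + v * (-1) ^ t * t.factorial + w * s.factorial, by ring⟩

variable {p : ℕ} [Fact p.Prime]

theorem factorial_mul_hsum_mul_sub_mem {k r m : ℕ} (hk : k + 1 < p) (hr : 0 < r) (h : p ^ r ∣ m) :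
    k.factorial * hsum p (k + 1) (p * m) - m * ∑ a ∈ Icc 1 k,
      (-1) ^ (a - 1) * (a - 1).factorial * (k - a).factorial * residueSum p (k + 1) a ∈
        padicIdeal p (r + 1) := by
  have hchoose {a : ℕ} (ha : a ∈ Icc 1 k) : (k.factorial * (m + k - a).choose k -
      (-1) ^ (a - 1) * (a - 1).factorial * (k - a).factorial * m : ℚ) ∈ padicIdeal p (r + 1) := by
    obtain ⟨ha1, hak⟩ := mem_Icc.1 ha
    have hdvd := sq_dvd_factorial_mul_choose_sub m (k - a) (a - 1)
    rw [show k - a + (a - 1) + 1 = k by omega, show m + (k - a) = m + k - a by omega] at hdvd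
    have hpow : (p : ℤ) ^ (r + 1) ∣ (m : ℤ) ^ 2 := mod_cast (pow_dvd_pow p (by omega)).trans
      (pow_mul p r 2 ▸ pow_dvd_pow_of_dvd h 2)
    exact mod_cast padicIdeal.intCast_mem_iff.2 (hpow.trans hdvd)
  have hresidue (a : ℕ) : residueSum p (k + 1) a ∈ padicIdeal p 0 :=
    sum_mem fun u hu => padicIdeal.prod_mem_zero fun i _ =>
      padicIdeal.inv_natCast_mem_zero (not_dvd_val_of_ne_zero ((mem_filter.1 hu).2.1 i))
  have hmem := add_mem (padicIdeal.mul_mem_of_right (padicIdeal.natCast_mem_zero k.factorial)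
    (hsum_mul_sub_mem_padicIdeal hk h))
    (sum_mem fun a ha => padicIdeal.mul_mem_of_left (hchoose ha) (hresidue a))
  convert hmem using 1
  simp only [mul_sub, sub_mul, sum_sub_distrib, mul_sum]
  rw [sum_congr rfl fun a _ => mul_assoc _ _ _, sub_add_sub_cancel]
  exact congrArg _ (sum_congr rfl fun a _ => by ring)

theorem residueSum_six_one_mem (hp : 7 < p) : residueSum p 6 1 ∈ padicIdeal p 1 := by
  have hself : hsum p 6 p ∈ padicIdeal p 1 :=
    hsum_self_mem_padicIdeal_of_odd (k := 5) (by decide) (by omega)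
  have hreduce := hsum_mul_sub_mem_padicIdeal (p := p) (k := 5) (r := 0) (m := 1) (by omega)
    (by simp)
  convert sub_mem hself hreduce using 1
  simp [sum_Icc_succ_top, Nat.choose]

theorem residueSum_six_two_sub_mem (hp : 7 < p) :
    residueSum p 6 2 - 40 * bernoulli (p - 3) ^ 2 ∈ padicIdeal p 1 := by
  have hreduce := hsum_mul_sub_mem_padicIdeal (p := p) (k := 5) (r := 0) (m := 2) (by omega)
    (by simp)
  have hone := nsmul_mem (residueSum_six_one_mem hp) 6
  convert sub_mem (sub_mem (hsum_six_two_mul_sub_mem_padicIdeal hp) hreduce) hone using 1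
  simp [sum_Icc_succ_top, Nat.choose, mul_comm p 2]
  ring

theorem residueSum_six_four_sub_mem : residueSum p 6 4 - residueSum p 6 2 ∈ padicIdeal p 1 := by
  simpa only [Even.neg_one_pow (show Even 6 by decide), one_mul] using
    neg_one_pow_mul_residueSum_sub_mem (p := p) (show 2 + 4 = 6 from rfl)

theorem residueSum_six_five_sub_mem : residueSum p 6 5 - residueSum p 6 1 ∈ padicIdeal p 1 := by
  simpa only [Even.neg_one_pow (show Even 6 by decide), one_mul] using
    neg_one_pow_mul_residueSum_sub_mem (p := p) (show 1 + 5 = 6 from rfl)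

theorem residueSum_six_three_add_mem (hp : 7 < p) :
    residueSum p 6 3 + 80 * bernoulli (p - 3) ^ 2 ∈ padicIdeal p 1 := by
  have htotal := sum_residueSum_mem_padicIdeal (p := p) (k := 5)
    (Nat.not_dvd_of_pos_of_lt (by omega) (by omega))
  have hone := nsmul_mem (residueSum_six_one_mem hp) 2
  have htwo := nsmul_mem (residueSum_six_two_sub_mem hp) 2
  convert sub_mem htotal (add_mem (add_mem hone htwo)
    (add_mem residueSum_six_four_sub_mem residueSum_six_five_sub_mem)) using 1
  simp [sum_Icc_succ_top]
  ring

theorem sum_factorial_mul_residueSum_six_add_mem (hp : 7 < p) :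
    ∑ a ∈ Icc 1 5, (-1) ^ (a - 1) * (a - 1).factorial * (5 - a).factorial * residueSum p 6 a +
      800 * bernoulli (p - 3) ^ 2 ∈ padicIdeal p 1 := by
  have hone := nsmul_mem (residueSum_six_one_mem hp) 48
  have htwo := nsmul_mem (residueSum_six_two_sub_mem hp) 12
  have hthree := nsmul_mem (residueSum_six_three_add_mem hp) 4
  have hfour := nsmul_mem (residueSum_six_four_sub_mem (p := p)) 6
  have hfive := nsmul_mem (residueSum_six_five_sub_mem (p := p)) 24
  convert add_mem (sub_mem (sub_mem (add_mem hone hfive) hfour) htwo) hthree using 1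
  simp [sum_Icc_succ_top, Nat.factorial]
  ring

theorem hsum_six_mul_add_mem {r m : ℕ} (hp : 7 < p) (hr : 0 < r) (h : p ^ r ∣ m) :
    hsum p 6 (p * m) + 20 / 3 * m * bernoulli (p - 3) ^ 2 ∈ padicIdeal p (r + 1) := by
  have hunit : ¬ (p : ℤ) ∣ (Nat.factorial 5 : ℕ) := Int.natCast_dvd_natCast.not.2
    (mt (Nat.Prime.dvd_factorial Fact.out).1 (by omega))
  have hm : (m : ℚ) ∈ padicIdeal p r :=
    mod_cast padicIdeal.intCast_mem_iff.2 (mod_cast h : (p : ℤ) ^ r ∣ m)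
  rw [← padicIdeal.intCast_mul_mem_iff hunit]
  convert add_mem (factorial_mul_hsum_mul_sub_mem (k := 5) (by omega) hr h)
    (padicIdeal.mul_mem hm (sum_factorial_mul_residueSum_six_add_mem hp)) using 1
  rw [Nat.factorial]
  push_cast
  ring

end Assembly

theorem stmt_15 (p r n : ℕ) (hp : p.Prime) (hp11 : 11 ≤ p) (hr : 2 ≤ r) (hn : 0 < n)
    (hpn : p ^ r ∣ n) (hp2n : ¬ p ^ (r + 1) ∣ n) :
    ratCong p r (hsum p 6 n)
      (-((Nat.factorial 5 : ℚ) / 18) * ((n / p : ℕ) : ℚ) * bernoulli (p - 3) ^ 2) := by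
  have := Fact.mk hp
  obtain ⟨s, rfl⟩ := Nat.exists_eq_add_of_le' (one_le_two.trans hr)
  obtain ⟨m, rfl⟩ := (dvd_pow_self p s.succ_ne_zero).trans hpn
  have hm : p ^ s ∣ m := Nat.dvd_of_mul_dvd_mul_left hp.pos (by rwa [← pow_succ'])
  apply ratCong_of_sub_mem
  convert hsum_six_mul_add_mem (by omega) (by omega) hm using 1
  rw [Nat.mul_div_cancel_left m hp.pos]
  norm_num [Nat.factorial]
end

section
/- Let p ≥ 11 be a prime. Then the sum of 1/(l_1⋯l_6) over all 6-tuples of positive integers with l_1+⋯+l_6 = 2p and each l_i < p is congruent to 40·B_{p-3}² modulo p, and the sum over 6-tuples with l_1+⋯+l_6 = 3p and each l_i < p is congruent to -80·B_{p-3}² modulo p. -/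
/-- Sum of `1/(l₁⋯lₙ)` over positive `n`-tuples summing to `N` with each `lᵢ < p`. -/
def hsumLt (p n N : ℕ) : ℚ :=
  ∑ l ∈ (Fintype.piFinset fun _ : Fin n => Finset.Ico 1 p) |>.filter
      (fun l => ∑ i, l i = N),
    ∏ i, (1 : ℚ) / l i

/-!
Let `L = ∑_{0 < l < p} X ^ l / l` over `ZMod p`, so that the residue of `hsumLt p n N` is the
coefficient of `X ^ N` in `L ^ n`. Write `c_k = contract p (L ^ k)` for the part of `L ^ k` carried
by the exponents divisible by `p`; only `c_6` is needed.

The logarithmic equation `X * (1 - X) * L' = X - X ^ p` gives a recurrence in `s` for the moments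
`contract p (X ^ s * L ^ k)`. Let `V_s` be the alternating binomial convolution of the moment
sequences of shifts `s` and `p - s`. Then `s ^ n * V_s n` does not depend on `0 < s < p`, as long as
`V_0` vanishes at the smaller positive indices. Since `∑_{0 ≤ s < p} V_s n = 0` and
`∑ s ^ (p - 1 - n) = 0`, induction yields the vanishing for `0 < n < p - 1` of `V_0 n`, which is
`X * ∑ i, (-1) ^ i * n.choose i * c_i * c_{n - i}`.

As `c_1 = 0`, the cases `n = 2` and `n = 6` give `c_2 = 0` and `c_6 = 10 * c_3 ^ 2`. Finally
`c_3` is `2 * B_{p-3} * (X ^ 2 - X)`: its coefficient at `1` is a double power sum evaluated by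
Faulhaber's formula, and the symmetry `l ↦ p - l` determines the coefficient at `2`.
-/

section RatCast

open Finset Nat

variable (K : Type*) [Field K]

/-- The rationals whose denominator does not vanish in the field `K`: those on which `Rat.cast`
avoids the junk value `x / 0 = 0` and is therefore a ring homomorphism to `K`. For `K = ZMod p`
these are the `p`-integral rationals. -/
def ratCastDomain : Subring ℚ where
  carrier := {q | (q.den : K) ≠ 0}
  mul_mem' {q r} hq hr := ne_zero_of_dvd_ne_zero (mul_ne_zero hq hr)
    (mod_cast Nat.cast_dvd_cast (Rat.mul_den_dvd q r))
  add_mem' {q r} hq hr := ne_zero_of_dvd_ne_zero (mul_ne_zero hq hr)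
    (mod_cast Nat.cast_dvd_cast (Rat.add_den_dvd q r))
  neg_mem' hq := hq
  one_mem' := by simp
  zero_mem' := by simp

variable {K}

lemma mem_ratCastDomain {q : ℚ} : q ∈ ratCastDomain K ↔ (q.den : K) ≠ 0 :=
  Iff.rfl

lemma inv_natCast_mem_ratCastDomain {n : ℕ} (hn : (n : K) ≠ 0) :
    (n : ℚ)⁻¹ ∈ ratCastDomain K := by
  have hn0 : n ≠ 0 := by rintro rfl; exact hn Nat.cast_zero
  rwa [mem_ratCastDomain, Rat.inv_natCast_den, if_neg hn0]

lemma ratCast_sum {ι : Type*} {s : Finset ι} {f : ι → ℚ} (hf : ∀ i ∈ s, f i ∈ ratCastDomain K) :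
    ((∑ i ∈ s, f i : ℚ) : K) = ∑ i ∈ s, (f i : K) := by
  induction s using Finset.cons_induction with
  | empty => simp
  | cons i s hi ih =>
    rw [forall_mem_cons] at hf
    rw [sum_cons, sum_cons, Rat.cast_add_of_ne_zero hf.1 (sum_mem hf.2), ih hf.2]

lemma bernoulli'_mem_ratCastDomain {n : ℕ} (hn : ((n + 1)! : K) ≠ 0) :
    bernoulli' n ∈ ratCastDomain K := by
  induction n using Nat.strong_induction_on with
  | _ n ih =>
  rw [bernoulli'_def]
  refine sub_mem (one_mem _) (sum_mem fun k hk ↦ ?_)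
  have hkn := mem_range.1 hk
  have hden : (n : ℚ) - k + 1 = (n - k + 1 : ℕ) := by rw [cast_add_one, cast_sub hkn.le]
  rw [hden, div_eq_mul_inv]
  refine mul_mem (mul_mem (natCast_mem _ _) (inv_natCast_mem_ratCastDomain ?_)) (ih k hkn ?_)
  · exact ne_zero_of_dvd_ne_zero hn (cast_dvd_cast (dvd_factorial (by omega) (by omega)))
  · exact ne_zero_of_dvd_ne_zero hn (cast_dvd_cast (factorial_dvd_factorial (by omega)))

theorem bernoulli_mem_ratCastDomain {n : ℕ} (hn : ((n + 1)! : K) ≠ 0) :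
    bernoulli n ∈ ratCastDomain K :=
  mul_mem (pow_mem (neg_mem (one_mem _)) n) (bernoulli'_mem_ratCastDomain hn)

theorem add_one_mul_sum_range_pow {n : ℕ} (hn : ((n + 1)! : K) ≠ 0) (s : ℕ) :
    (n + 1) * ∑ i ∈ range s, (i : K) ^ n =
      ∑ k ∈ range (n + 1), (bernoulli k : K) * (n + 1).choose k * (s : K) ^ (n + 1 - k) := by
  have hfaulhaber : ((n + 1 : ℕ) * ∑ i ∈ range s, i ^ n : ℕ) =
      ∑ k ∈ range (n + 1), bernoulli k * (((n + 1).choose k * s ^ (n + 1 - k) : ℕ) : ℚ) := by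
    push_cast
    rw [sum_range_pow, mul_sum]
    refine sum_congr rfl fun k _ ↦ ?_
    field_simp
  have hmem : ∀ k ∈ range (n + 1), bernoulli k ∈ ratCastDomain K := fun k hk ↦
    bernoulli_mem_ratCastDomain <| ne_zero_of_dvd_ne_zero hn <|
      cast_dvd_cast (factorial_dvd_factorial (mem_range.1 hk))
  calc (n + 1) * ∑ i ∈ range s, (i : K) ^ n
      = (((n + 1 : ℕ) * ∑ i ∈ range s, i ^ n : ℕ) : K) := by push_cast; rfl
    _ = ((∑ k ∈ range (n + 1), bernoulli k * (((n + 1).choose k * s ^ (n + 1 - k) : ℕ) : ℚ) :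
          ℚ) : K) := by rw [← hfaulhaber, Rat.cast_natCast]
    _ = ∑ k ∈ range (n + 1), (bernoulli k : K) * (n + 1).choose k * (s : K) ^ (n + 1 - k) := by
      rw [ratCast_sum fun k hk ↦ mul_mem (hmem k hk) (natCast_mem _ _)]
      refine sum_congr rfl fun k hk ↦ ?_
      rw [Rat.cast_mul_of_ne_zero (hmem k hk) (mem_ratCastDomain.1 (natCast_mem _ _)),
        Rat.cast_natCast]
      push_cast
      ring

lemma ratCong_of_ratCast_eq {p : ℕ} [Fact p.Prime] {x y : ℚ} (hx : x ∈ ratCastDomain (ZMod p))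
    (hy : y ∈ ratCastDomain (ZMod p)) (h : (x : ZMod p) = y) : ratCong p 1 x y := by
  have hmem := sub_mem hx hy
  have hcast : ((x - y : ℚ) : ZMod p) = 0 := by rw [Rat.cast_sub_of_ne_zero hx hy, h, sub_self]
  rw [Rat.cast_def, div_eq_zero_iff, or_iff_left hmem, ZMod.intCast_zmod_eq_zero_iff_dvd] at hcast
  obtain ⟨c, hc⟩ := hcast
  have hz : c * ((x - y).den : ℚ)⁻¹ ∈ ratCastDomain (ZMod p) :=
    mul_mem (intCast_mem _ _) (inv_natCast_mem_ratCastDomain hmem)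
  refine ⟨_, ?_, mt (ZMod.natCast_eq_zero_iff _ p).2 hz⟩
  rw [pow_one, ← mul_assoc, ← div_eq_mul_inv]
  conv_lhs => rw [← Rat.num_div_den (x - y), hc]
  push_cast
  rfl

end RatCast

section AltConv

open Finset

variable {M : Type*} [CommRing M]

/-- The alternating binomial convolution of two sequences. In terms of exponential generating
functions it is the product `û(-y) v̂(y)`. -/
def altConv : (ℕ → M) →ₗ[M] (ℕ → M) →ₗ[M] ℕ → M :=
  LinearMap.mk₂ M
    (fun u v n ↦ ∑ ij ∈ antidiagonal n, (-1) ^ ij.1 * (n.choose ij.1 : M) * (u ij.1 * v ij.2))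
    (fun _ _ _ ↦ funext fun _ ↦ by simp [add_mul, mul_add, sum_add_distrib])
    (fun _ _ _ ↦ funext fun _ ↦ by simp [mul_sum, mul_left_comm, mul_assoc])
    (fun _ _ _ ↦ funext fun _ ↦ by simp [mul_add, sum_add_distrib])
    (fun _ _ _ ↦ funext fun _ ↦ by simp [mul_sum, mul_left_comm])

/-- Multiplication by the variable of the exponential generating function of a sequence. At `n = 0`
the junk value `u (0 - 1) = u 0` is killed by the factor `n`. -/
def umbralMul : (ℕ → M) →ₗ[M] ℕ → M where
  toFun u n := n * u (n - 1)
  map_add' _ _ := funext fun _ ↦ mul_add _ _ _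
  map_smul' _ _ := funext fun _ ↦ mul_left_comm _ _ _

lemma altConv_apply (u v : ℕ → M) (n : ℕ) :
    altConv u v n =
      ∑ ij ∈ antidiagonal n, (-1) ^ ij.1 * (n.choose ij.1 : M) * (u ij.1 * v ij.2) :=
  rfl

lemma umbralMul_apply (u : ℕ → M) (n : ℕ) : umbralMul u n = n * u (n - 1) :=
  rfl

lemma altConv_umbralMul_left (u v : ℕ → M) :
    altConv (umbralMul u) v = -umbralMul (altConv u v) := by
  ext (_ | n)
  · simp [altConv_apply, umbralMul_apply]
  · rw [Pi.neg_apply, umbralMul_apply, altConv_apply, altConv_apply, Nat.sum_antidiagonal_succ,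
      Nat.add_sub_cancel, mul_sum, ← sum_neg_distrib]
    simp only [umbralMul_apply, Nat.cast_zero, zero_mul, mul_zero, zero_add]
    refine sum_congr rfl fun ij _ ↦ ?_
    have hchoose : ((n + 1 : ℕ) : M) * n.choose ij.1 = (n + 1).choose (ij.1 + 1) * (ij.1 + 1 : ℕ) :=
      mod_cast congrArg (Nat.cast (R := M)) (Nat.add_one_mul_choose_eq n ij.1)
    rw [Nat.add_sub_cancel]
    linear_combination (-1) ^ ij.1 * u ij.1 * v ij.2 * hchoose

lemma altConv_umbralMul_right (u v : ℕ → M) :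
    altConv u (umbralMul v) = umbralMul (altConv u v) := by
  ext (_ | n)
  · simp [altConv_apply, umbralMul_apply]
  · rw [umbralMul_apply, altConv_apply, altConv_apply, Nat.sum_antidiagonal_succ',
      Nat.add_sub_cancel, mul_sum]
    simp only [umbralMul_apply, Nat.cast_zero, zero_mul, mul_zero, zero_add]
    refine sum_congr rfl fun ij hij ↦ ?_
    have hchoose : (n.choose ij.1 : M) * (n + 1 : ℕ) = (n + 1).choose ij.1 * (ij.2 + 1 : ℕ) := by
      have := Nat.choose_mul_succ_eq n ij.1
      rw [show n + 1 - ij.1 = ij.2 + 1 by have := mem_antidiagonal.1 hij; omega] at this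
      exact mod_cast congrArg (Nat.cast (R := M)) this
    rw [Nat.add_sub_cancel]
    linear_combination -(-1) ^ ij.1 * u ij.1 * v ij.2 * hchoose

lemma sum_antidiagonal_neg_one_pow_mul_choose {n : ℕ} (hn : n ≠ 0) :
    ∑ ij ∈ antidiagonal n, (-1) ^ ij.1 * (n.choose ij.1 : M) = 0 := by
  simpa [hn, mul_comm] using ((Commute.all (-1 : M) 1).add_pow' n).symm

end AltConv

section Contract

open Polynomial Finset

variable {R : Type*} [CommSemiring R] {p : ℕ}

lemma contract_apply_one (p : ℕ) : contract p (1 : R[X]) = 1 := by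
  rw [← C_1, contract_C]

lemma contract_C_mul (hp : p ≠ 0) (a : R) (f : R[X]) :
    contract p (C a * f) = C a * contract p f := by
  ext; simp only [coeff_contract hp, coeff_C_mul]

lemma contract_X_pow_self_mul (hp : p ≠ 0) (f : R[X]) :
    contract p (X ^ p * f) = X * contract p f := by
  rw [mul_comm, ← expand_X (R := R) p, contract_mul_expand hp, mul_comm]

lemma contract_monomial (hp : p ≠ 0) (n : ℕ) (a : R) :
    contract p (monomial n a) = if p ∣ n then monomial (n / p) a else 0 := by
  ext m
  rw [coeff_contract hp, coeff_monomial]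
  split_ifs with h hdvd hdvd
  · simp [h, hp]
  · exact absurd (h ▸ dvd_mul_left p m) hdvd
  · rw [coeff_monomial, if_neg]
    rintro rfl
    exact h (Nat.div_mul_cancel hdvd).symm
  · rw [coeff_zero]

lemma exists_lt_dvd_add (hp : p ≠ 0) (n : ℕ) : ∃ s < p, p ∣ s + n :=
  ⟨(p - n % p) % p, Nat.mod_lt _ hp.bot_lt, by
    rw [Nat.dvd_iff_mod_eq_zero, Nat.mod_add_mod, ← Nat.add_mod_mod,
      Nat.sub_add_cancel (Nat.mod_lt n hp.bot_lt).le, Nat.mod_self]⟩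

lemma sum_contract_mul_contract (hp : p ≠ 0) (f g : R[X]) :
    ∑ s ∈ range p, contract p (X ^ s * f) * contract p (X ^ (p - s) * g) =
      X * contract p (f * g) := by
  induction f using Polynomial.induction_on' with
  | add f₁ f₂ h₁ h₂ => simp only [mul_add, add_mul, contract_add hp, sum_add_distrib, h₁, h₂]
  | monomial n a =>
  induction g using Polynomial.induction_on' with
  | add g₁ g₂ h₁ h₂ => simp only [mul_add, contract_add hp, sum_add_distrib, h₁, h₂]
  | monomial m b =>
  obtain ⟨s, hs, c, hc⟩ := exists_lt_dvd_add hp n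
  have hunique : ∀ t ∈ range p, t ≠ s →
      contract p (X ^ t * monomial n a) * contract p (X ^ (p - t) * monomial m b) = 0 := by
    intro t ht hts
    rw [X_pow_mul_monomial, contract_monomial hp, if_neg, zero_mul]
    intro hdvd
    have hmod : t + n ≡ s + n [MOD p] := by
      rw [add_comm t]
      exact (Nat.modEq_zero_iff_dvd.2 hdvd).trans (Nat.modEq_zero_iff_dvd.2 ⟨c, hc⟩).symm
    exact hts ((hmod.add_right_cancel' n).eq_of_lt_of_lt (mem_range.1 ht) hs)
  rw [sum_eq_single_of_mem s (mem_range.2 hs) hunique, monomial_mul_monomial]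
  simp only [X_pow_mul_monomial, contract_monomial hp]
  have hsum : (n + s) + (m + (p - s)) = (n + m) + p := by omega
  have hdvd : p ∣ n + s := ⟨c, by omega⟩
  have hiff : p ∣ m + (p - s) ↔ p ∣ n + m := by
    rw [← Nat.dvd_add_right hdvd, hsum, Nat.dvd_add_left dvd_rfl]
  rw [if_pos hdvd]
  by_cases h : p ∣ n + m
  · rw [if_pos (hiff.2 h), if_pos h, monomial_mul_monomial, X_mul_monomial,
      ← Nat.add_div_of_dvd_right hdvd, hsum, Nat.add_div_right _ hp.bot_lt]
  · rw [if_neg (mt hiff.1 h), if_neg h, mul_zero, mul_zero]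

lemma contract_X_mul_derivative [CharP R p] (hp : p ≠ 0) (f : R[X]) :
    contract p (X * derivative f) = 0 := by
  ext n
  rw [coeff_contract hp, coeff_zero]
  rcases h : n * p with _ | k
  · exact coeff_X_mul_zero _
  · rw [coeff_X_mul, coeff_derivative, ← Nat.cast_add_one, ← h, Nat.cast_mul,
      CharP.cast_eq_zero R p, mul_zero, mul_zero]

end Contract

section ContractRing

open Polynomial

variable {R : Type*} [CommRing R] {p : ℕ}

lemma contract_sub (hp : p ≠ 0) (f g : R[X]) :
    contract p (f - g) = contract p f - contract p g := by
  ext; simp_rw [coeff_sub, coeff_contract hp, coeff_sub]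

lemma contract_X_pow_succ_mul_derivative [CharP R p] (hp : p ≠ 0) (s : ℕ) (f : R[X]) :
    contract p (X ^ (s + 1) * derivative f) = -((s : R[X]) * contract p (X ^ s * f)) := by
  have hleibniz : X * derivative (X ^ s * f) =
      C (s : R) * (X ^ s * f) + X ^ (s + 1) * derivative f := by
    rcases s with _ | s
    · simp
    · rw [derivative_mul, derivative_X_pow, Nat.add_sub_cancel]; ring
  have h := contract_X_mul_derivative hp (X ^ s * f)
  rw [hleibniz, contract_add hp, contract_C_mul hp, C_eq_natCast] at h
  linear_combination h

end ContractRing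

section Moments

open Polynomial Finset

variable {R : Type*} [CommRing R] {p : ℕ} {L : R[X]}

/-- The moments `k ↦ contract p (X ^ s * L ^ k)`: up to the shift by `s`, they record the
coefficients of `L ^ k` at the exponents congruent to `-s` modulo `p`. -/
noncomputable def contractMoment (p : ℕ) (L : R[X]) (s : ℕ) : ℕ → R[X] :=
  fun k ↦ contract p (X ^ s * L ^ k)

lemma contractMoment_self (hp : p ≠ 0) :
    contractMoment p L p = (X : R[X]) • contractMoment p L 0 := by
  ext1 k
  rw [Pi.smul_apply, contractMoment, contractMoment, contract_X_pow_self_mul hp, pow_zero, one_mul,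
    smul_eq_mul]

lemma contractMoment_recurrence [CharP R p] (hp : p ≠ 0)
    (hL : X * (1 - X) * derivative L = X - X ^ p) (s : ℕ) :
    ((s : R[X]) + 1) • contractMoment p L (s + 1) - (s : R[X]) • contractMoment p L s =
      umbralMul (contractMoment p L (s + 1) - (X : R[X]) • contractMoment p L s) := by
  ext1 k
  have hpow : X ^ (s + 1) * derivative (L ^ k) - X ^ (s + 1 + 1) * derivative (L ^ k) =
      C (k : R) * (X ^ (s + 1) * L ^ (k - 1)) - C (k : R) * (X ^ p * (X ^ s * L ^ (k - 1))) := by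
    rw [derivative_pow]
    linear_combination C (k : R) * L ^ (k - 1) * X ^ s * hL
  have h := congrArg (contract p) hpow
  rw [contract_sub hp, contract_sub hp, contract_X_pow_succ_mul_derivative hp,
    contract_X_pow_succ_mul_derivative hp, contract_C_mul hp, contract_C_mul hp,
    contract_X_pow_self_mul hp, C_eq_natCast] at h
  simp only [Pi.sub_apply, Pi.smul_apply, smul_eq_mul, umbralMul_apply, contractMoment]
  push_cast at h
  linear_combination h

/-- The alternating binomial convolution of two moment sequences of `L`. -/
noncomputable def momentConv (p : ℕ) (L : R[X]) (s t : ℕ) : ℕ → R[X] :=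
  altConv (contractMoment p L s) (contractMoment p L t)

lemma momentConv_zero_zero_apply (n : ℕ) :
    momentConv p L 0 0 n = ∑ ij ∈ antidiagonal n, (-1) ^ ij.1 * (n.choose ij.1 : R[X]) *
      (contract p (L ^ ij.1) * contract p (L ^ ij.2)) := by
  simp only [momentConv, altConv_apply, contractMoment, pow_zero, one_mul]

lemma momentConv_succ_left [CharP R p] (hp : p ≠ 0)
    (hL : X * (1 - X) * derivative L = X - X ^ p) (s t : ℕ) :
    ((s : R[X]) + 1) • momentConv p L (s + 1) t + umbralMul (momentConv p L (s + 1) t) =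
      (s : R[X]) • momentConv p L s t + (X : R[X]) • umbralMul (momentConv p L s t) := by
  have h := congrArg (altConv · (contractMoment p L t)) (contractMoment_recurrence hp hL s)
  simp only [map_sub, map_smul, LinearMap.sub_apply, LinearMap.smul_apply,
    altConv_umbralMul_left] at h
  unfold momentConv
  linear_combination (norm := module) h

lemma momentConv_succ_right [CharP R p] (hp : p ≠ 0)
    (hL : X * (1 - X) * derivative L = X - X ^ p) {s t : ℕ} (hst : s + t + 1 = p) :
    (s : R[X]) • momentConv p L s (t + 1) + umbralMul (momentConv p L s (t + 1)) =
      ((s : R[X]) + 1) • momentConv p L s t + (X : R[X]) • umbralMul (momentConv p L s t) := by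
  have h := congrArg (altConv (contractMoment p L s)) (contractMoment_recurrence hp hL t)
  simp only [map_sub, map_smul, altConv_umbralMul_right] at h
  have ht : (t : R[X]) = -(s + 1) := by
    have : ((s + t + 1 : ℕ) : R[X]) = 0 := by rw [hst, CharP.cast_eq_zero]
    push_cast at this
    linear_combination this
  rw [ht] at h
  unfold momentConv
  linear_combination (norm := module) -h

lemma momentConv_invariant [CharP R p] (hp : p ≠ 0)
    (hL : X * (1 - X) * derivative L = X - X ^ p) {s : ℕ} (hs : s ≤ p) :
    ((s : R[X]) ^ 2) • momentConv p L s (p - s)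
        + ((s : R[X]) * (1 + X)) • umbralMul (momentConv p L s (p - s))
        + (X : R[X]) • umbralMul (umbralMul (momentConv p L s (p - s))) =
      (X : R[X]) • umbralMul (umbralMul (momentConv p L 0 p)) := by
  induction s with
  | zero => simp
  | succ s ih =>
    rw [← ih (by omega)]
    obtain ⟨t, ht⟩ : ∃ t, s + t + 1 = p := ⟨p - s - 1, by omega⟩
    rw [show p - (s + 1) = t by omega, show p - s = t + 1 by omega]
    have hleft := momentConv_succ_left hp hL s t
    have hright := momentConv_succ_right hp hL ht
    have hleft' := congrArg umbralMul hleft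
    have hright' := congrArg umbralMul hright
    simp only [map_add, map_smul] at hleft' hright'
    push_cast
    linear_combination (norm := module) ((s : R[X]) + 1) • hleft + (X : R[X]) • hleft' -
      (s : R[X]) • hright - (X : R[X]) • hright'

lemma contractMoment_zero (hp : p ≠ 0) {s : ℕ} (hs : ¬ p ∣ s) : contractMoment p L s 0 = 0 := by
  rw [contractMoment, pow_zero, mul_one, ← monomial_one_right_eq_X_pow, contract_monomial hp,
    if_neg hs]

lemma momentConv_zero (hp : p ≠ 0) {s t : ℕ} (hs : ¬ p ∣ s) : momentConv p L s t 0 = 0 := by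
  simp [momentConv, altConv_apply, contractMoment_zero hp hs]

lemma momentConv_one (hp : p ≠ 0) {s t : ℕ} (hs : ¬ p ∣ s) (ht : ¬ p ∣ t) :
    momentConv p L s t 1 = 0 := by
  simp [momentConv, altConv_apply, Nat.sum_antidiagonal_succ, contractMoment_zero hp hs,
    contractMoment_zero hp ht]

lemma momentConv_zero_self (hp : p ≠ 0) :
    momentConv p L 0 p = (X : R[X]) • momentConv p L 0 0 := by
  rw [momentConv, contractMoment_self hp, map_smul, momentConv]

lemma momentConv_add_two [CharP R p] (hp : p ≠ 0)
    (hL : X * (1 - X) * derivative L = X - X ^ p) {s : ℕ} (hs : s ≤ p) (n : ℕ) :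
    (s : R[X]) ^ 2 * momentConv p L s (p - s) (n + 2) =
      -((s : R[X]) * (1 + X) * (((n : R[X]) + 2) * momentConv p L s (p - s) (n + 1)))
        + X * (((n : R[X]) + 2) * (((n : R[X]) + 1) *
          (X * momentConv p L 0 0 n - momentConv p L s (p - s) n))) := by
  have h := congrFun (momentConv_invariant hp hL hs) (n + 2)
  rw [momentConv_zero_self hp] at h
  simp only [Pi.add_apply, Pi.smul_apply, smul_eq_mul, umbralMul_apply, Nat.add_sub_cancel,
    show n + 2 - 1 = n + 1 from rfl] at h
  push_cast at h
  linear_combination h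

lemma pow_mul_momentConv [CharP R p] (hp : p ≠ 0)
    (hL : X * (1 - X) * derivative L = X - X ^ p) {n : ℕ}
    (hvanish : ∀ m, m ≠ 0 → m + 2 ≤ n → momentConv p L 0 0 m = 0) {s : ℕ}
    (hs : 0 < s) (hsp : s < p) :
    (s : R[X]) ^ n * momentConv p L s (p - s) n = momentConv p L 1 (p - 1) n := by
  have hndvd {t : ℕ} (ht : 0 < t) (htp : t < p) : ¬ p ∣ t := Nat.not_dvd_of_pos_of_lt ht htp
  induction n using Nat.strong_induction_on with
  | _ n ih =>
  match n with
  | 0 => simp [momentConv_zero hp (hndvd hs hsp), momentConv_zero hp (hndvd one_pos (by omega))]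
  | 1 =>
    rw [momentConv_one hp (hndvd hs hsp) (hndvd (by omega) (by omega)),
      momentConv_one hp (hndvd one_pos (by omega)) (hndvd (by omega) (by omega)), mul_zero]
  | n + 2 =>
    have hn := ih n (by omega) fun m hm _ ↦ hvanish m hm (by omega)
    have hn' := ih (n + 1) (by omega) fun m hm _ ↦ hvanish m hm (by omega)
    have hrec := momentConv_add_two hp hL hsp.le n
    have hrec₁ := momentConv_add_two hp hL (s := 1) (by omega) n
    have hsource : (s : R[X]) ^ n * momentConv p L 0 0 n = momentConv p L 0 0 n := by
      rcases eq_or_ne n 0 with rfl | h0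
      · rw [pow_zero, one_mul]
      · rw [hvanish n h0 le_rfl, mul_zero]
    push_cast at hrec₁
    linear_combination (s : R[X]) ^ n * hrec - hrec₁ - (1 + X) * ((n : R[X]) + 2) * hn'
      + X * ((n : R[X]) + 2) * ((n : R[X]) + 1) * (X * hsource - hn)

lemma sum_momentConv (hp : p ≠ 0) {n : ℕ} (hn : n ≠ 0) :
    ∑ s ∈ range p, momentConv p L s (p - s) n = 0 := by
  simp only [momentConv, altConv_apply, contractMoment]
  rw [sum_comm]
  calc _ = ∑ ij ∈ antidiagonal n, (-1) ^ ij.1 * (n.choose ij.1 : R[X]) *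
            (X * contract p (L ^ n)) := sum_congr rfl fun ij hij ↦ by
        rw [← mul_sum, sum_contract_mul_contract hp, ← pow_add, mem_antidiagonal.1 hij]
    _ = 0 := by rw [← sum_mul, sum_antidiagonal_neg_one_pow_mul_choose hn, zero_mul]

end Moments

section PowerSums

open Finset

variable {p : ℕ}

lemma sum_range_natCast_zmod [NeZero p] {M : Type*} [AddCommMonoid M] (f : ZMod p → M) :
    ∑ s ∈ range p, f s = ∑ x, f x :=
  sum_nbij' (fun s ↦ (s : ZMod p)) ZMod.val (by simp) (by simp [ZMod.val_lt])
    (fun s hs ↦ ZMod.val_cast_of_lt (mem_range.1 hs)) (by simp) (by simp)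

variable [Fact p.Prime]

lemma sum_range_pow_zmod {k : ℕ} (hk : k ≠ 0) :
    ∑ s ∈ range p, (s : ZMod p) ^ k = if p - 1 ∣ k then -1 else 0 := by
  have hunits := FiniteField.sum_pow_units (ZMod p) k
  rw [ZMod.card] at hunits
  rw [sum_range_natCast_zmod (· ^ k), ← hunits, ← add_sum_erase _ _ (mem_univ 0), zero_pow hk,
    zero_add]
  exact (sum_nbij (fun u : (ZMod p)ˣ ↦ (u : ZMod p)) (by simp) Units.val_injective.injOn
    (fun x hx ↦ ⟨Units.mk0 x (by simpa using hx), by simp⟩) fun _ _ ↦ rfl).symm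

lemma sum_range_pow_eq_zero {R : Type*} [CommRing R] [CharP R p] {k : ℕ} (hk : k < p - 1) :
    ∑ s ∈ range p, (s : R) ^ k = 0 := by
  have hzmod : ∑ s ∈ range p, (s : ZMod p) ^ k = 0 := by
    rw [sum_range_natCast_zmod (· ^ k)]
    exact FiniteField.sum_pow_lt_card_sub_one (ZMod p) k (by rwa [ZMod.card])
  simpa using congrArg (ZMod.castHom dvd_rfl R) hzmod

lemma natCast_pow_sub_one_eq_one {R : Type*} [CommRing R] [CharP R p] {s : ℕ} (hs : ¬ p ∣ s) :
    (s : R) ^ (p - 1) = 1 := by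
  simpa using congrArg (ZMod.castHom dvd_rfl R)
    (ZMod.pow_card_sub_one_eq_one (mt (ZMod.natCast_eq_zero_iff s p).1 hs))

end PowerSums

section MomentVanishing

open Polynomial Finset

variable {p : ℕ} [Fact p.Prime] {R : Type*} [CommRing R] [CharP R p] {L : R[X]}

theorem momentConv_zero_zero_eq_zero (hL : X * (1 - X) * derivative L = X - X ^ p) {n : ℕ}
    (hn : n ≠ 0) (hnp : n < p - 1) : momentConv p L 0 0 n = 0 := by
  have hp : p ≠ 0 := (Fact.out : p.Prime).ne_zero
  induction n using Nat.strong_induction_on with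
  | _ n ih =>
  have hvanish : ∀ m, m ≠ 0 → m + 2 ≤ n → momentConv p L 0 0 m = 0 :=
    fun m hm _ ↦ ih m (by omega) hm (by omega)
  have hterm : ∀ s ∈ (range p).erase 0, momentConv p L s (p - s) n =
      (s : R[X]) ^ (p - 1 - n) * momentConv p L 1 (p - 1) n := by
    intro s hs
    obtain ⟨hs0, hsp⟩ := mem_erase.1 hs
    have hs0 := Nat.pos_of_ne_zero hs0
    have hsp := mem_range.1 hsp
    rw [← pow_mul_momentConv hp hL hvanish hs0 hsp, ← mul_assoc, ← pow_add,
      Nat.sub_add_cancel hnp.le, natCast_pow_sub_one_eq_one (Nat.not_dvd_of_pos_of_lt hs0 hsp),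
      one_mul]
  have hpow : ∑ s ∈ (range p).erase 0, (s : R[X]) ^ (p - 1 - n) = 0 := by
    rw [sum_erase _ (by rw [Nat.cast_zero, zero_pow (by omega)]),
      sum_range_pow_eq_zero (by omega)]
  have hsum := sum_momentConv (L := L) hp hn
  rw [← add_sum_erase _ _ (mem_range.2 (Nat.pos_of_ne_zero hp)), sum_congr rfl hterm, ← sum_mul,
    hpow, zero_mul, add_zero, Nat.sub_zero, momentConv_zero_self hp, Pi.smul_apply,
    smul_eq_mul] at hsum
  exact isRegular_X.left (hsum.trans (mul_zero X).symm)

theorem contract_sq [NoZeroDivisors R] [Nontrivial R] (hp : 3 < p)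
    (hL : X * (1 - X) * derivative L = X - X ^ p) : contract p (L ^ 2) = contract p L ^ 2 := by
  have htwo : (2 : R[X]) ≠ 0 :=
    mod_cast CharP.cast_ne_zero_of_ne_of_prime R[X] Nat.prime_two (show p ≠ 2 by omega)
  refine sub_eq_zero.1 ((mul_eq_zero_iff_left htwo).1 ?_)
  calc 2 * (contract p (L ^ 2) - contract p L ^ 2) = momentConv p L 0 0 2 := by
        simp [momentConv_zero_zero_apply, Nat.sum_antidiagonal_succ, contract_apply_one]
        ring
    _ = 0 := momentConv_zero_zero_eq_zero hL two_ne_zero (by omega)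

theorem contract_pow_six [NoZeroDivisors R] [Nontrivial R] (hp : 7 < p)
    (hL : X * (1 - X) * derivative L = X - X ^ p) (hcontract : contract p L = 0) :
    contract p (L ^ 6) = 10 * contract p (L ^ 3) ^ 2 := by
  have htwo : (2 : R[X]) ≠ 0 :=
    mod_cast CharP.cast_ne_zero_of_ne_of_prime R[X] Nat.prime_two (show p ≠ 2 by omega)
  have hsq : contract p (L ^ 2) = 0 := by
    rw [contract_sq (by omega) hL, hcontract, zero_pow two_ne_zero]
  refine sub_eq_zero.1 ((mul_eq_zero_iff_left htwo).1 ?_)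
  calc 2 * (contract p (L ^ 6) - 10 * contract p (L ^ 3) ^ 2) = momentConv p L 0 0 6 := by
        simp [momentConv_zero_zero_apply, Nat.sum_antidiagonal_succ, contract_apply_one, hsq,
          hcontract, show Nat.choose 6 3 = 20 from rfl]
        ring
    _ = 0 := momentConv_zero_zero_eq_zero hL (by decide) (by omega)

end MomentVanishing

section BernoulliSums

open Finset

variable {p : ℕ} [Fact p.Prime]

lemma natCast_factorial_zmod_ne_zero {n : ℕ} (hn : n < p) : (n.factorial : ZMod p) ≠ 0 :=
  ((IsUnit.natCast_factorial_iff_of_charP p).2 hn).ne_zero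

theorem sum_range_pow_mul_sum_range_pow {a b : ℕ} (ha : a + 2 ≤ p) (hb : b + 2 ≤ p)
    (hab : p ≤ a + b + 2) :
    (b + 1) * ∑ s ∈ range p, (s : ZMod p) ^ a * ∑ i ∈ range s, (i : ZMod p) ^ b =
      -(bernoulli (a + b + 2 - p) * (b + 1).choose (a + b + 2 - p)) := by
  have hfaulhaber (s : ℕ) := add_one_mul_sum_range_pow (K := ZMod p) (n := b)
    (natCast_factorial_zmod_ne_zero (by omega)) s
  calc (b + 1) * ∑ s ∈ range p, (s : ZMod p) ^ a * ∑ i ∈ range s, (i : ZMod p) ^ b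
      = ∑ k ∈ range (b + 1), (bernoulli k * (b + 1).choose k : ZMod p) *
          ∑ s ∈ range p, (s : ZMod p) ^ (a + (b + 1 - k)) := by
        simp only [mul_sum (range p), mul_left_comm _ (_ ^ a), hfaulhaber]
        simp only [mul_sum, pow_add]
        rw [sum_comm]
        exact sum_congr rfl fun _ _ ↦ sum_congr rfl fun _ _ ↦ by ring
    _ = _ := by
      rw [sum_eq_single_of_mem (a + b + 2 - p) (mem_range.2 (by omega)),
        show a + (b + 1 - (a + b + 2 - p)) = p - 1 by omega, sum_range_pow_zmod (by omega),
        if_pos dvd_rfl, mul_neg_one]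
      intro k hk hne
      have hk := mem_range.1 hk
      rw [sum_range_pow_zmod (by omega), if_neg, mul_zero]
      rintro ⟨c, hc⟩
      obtain rfl | rfl | hc2 : c = 0 ∨ c = 1 ∨ 2 ≤ c := by omega
      · omega
      · omega
      · have := Nat.mul_le_mul_left (p - 1) hc2
        omega

lemma natCast_choose_sub_one {k : ℕ} (hk : k < p) : ((p - 1).choose k : ZMod p) = (-1) ^ k := by
  induction k with
  | zero => simp
  | succ k ih =>
    have hpascal : (p - 1).choose k + (p - 1).choose (k + 1) = p.choose (k + 1) := by
      rw [← Nat.choose_succ_succ', Nat.sub_add_cancel (by omega)]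
    have h := congrArg (Nat.cast : ℕ → ZMod p) hpascal
    rw [(ZMod.natCast_eq_zero_iff _ p).2 ((Fact.out : p.Prime).dvd_choose_self k.succ_ne_zero hk),
      Nat.cast_add, ih (by omega)] at h
    rw [pow_succ]
    linear_combination h

lemma pow_sub_one_sub_eq_inv_pow {k : ℕ} (hk : k < p - 1) (hk0 : k ≠ 0) (x : ZMod p) :
    x ^ (p - 1 - k) = x⁻¹ ^ k := by
  rcases eq_or_ne x 0 with rfl | hx
  · rw [zero_pow (by omega), inv_zero, zero_pow hk0]
  · rw [pow_sub₀ x hx hk.le, ZMod.pow_card_sub_one_eq_one hx, one_mul, inv_pow]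

lemma sum_inv_sq_mul_sum_inv (hp : 3 < p) :
    ∑ s ∈ range p, (s : ZMod p)⁻¹ ^ 2 * ∑ i ∈ range s, (i : ZMod p)⁻¹ = bernoulli (p - 3) := by
  have h := sum_range_pow_mul_sum_range_pow (p := p) (a := p - 1 - 2) (b := p - 1 - 1)
    (by omega) (by omega) (by omega)
  have hchoose : ((p - 1).choose (p - 3) : ZMod p) = 1 := by
    rw [Nat.choose_symm_of_eq_add (show p - 1 = p - 3 + 2 by omega),
      natCast_choose_sub_one (by omega), neg_one_sq]
  have hcast : ((p - 1 - 1 : ℕ) : ZMod p) + 1 = -1 := by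
    rw [← Nat.cast_add_one, Nat.sub_add_cancel (by omega), Nat.cast_sub (by omega),
      CharP.cast_eq_zero, zero_sub, Nat.cast_one]
  rw [hcast, show p - 1 - 2 + (p - 1 - 1) + 2 - p = p - 3 by omega,
    Nat.sub_add_cancel (show 1 ≤ p - 1 by omega), hchoose] at h
  simp only [pow_sub_one_sub_eq_inv_pow (show 2 < p - 1 by omega) two_ne_zero,
    pow_sub_one_sub_eq_inv_pow (show 1 < p - 1 by omega) one_ne_zero, pow_one] at h
  linear_combination -h

end BernoulliSums

section TruncLog

open Polynomial hiding bernoulli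
open Finset

variable {p : ℕ}

/-- The truncation `∑_{1 ≤ l < p} X ^ l / l` of the power series `-log (1 - X)` over `ZMod p`.
The coefficients of its `n`-th power are the residues of the sums `hsumLt p n N`. -/
noncomputable def truncLog (p : ℕ) : (ZMod p)[X] :=
  ∑ l ∈ Ico 1 p, monomial l (l : ZMod p)⁻¹

lemma natDegree_truncLog_le : (truncLog p).natDegree ≤ p - 1 :=
  natDegree_sum_le_of_forall_le _ _ fun _ hl ↦
    (natDegree_monomial_le _).trans (Nat.le_sub_one_of_lt (mem_Ico.1 hl).2)

variable [Fact p.Prime]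

lemma natCast_zmod_ne_zero_of_mem_Ico {l : ℕ} (hl : l ∈ Ico 1 p) : (l : ZMod p) ≠ 0 :=
  have := mem_Ico.1 hl
  mt (ZMod.natCast_eq_zero_iff l p).1 (Nat.not_dvd_of_pos_of_lt this.1 this.2)

lemma coeff_truncLog (n : ℕ) : (truncLog p).coeff n = if n < p then (n : ZMod p)⁻¹ else 0 := by
  simp only [truncLog, finsetSum_coeff, coeff_monomial, sum_ite_eq', mem_Ico]
  rcases n.eq_zero_or_pos with rfl | hn
  · simp
  · simp [Nat.one_le_iff_ne_zero, hn.ne']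

lemma X_mul_derivative_truncLog : X * derivative (truncLog p) = ∑ l ∈ Ico 1 p, X ^ l := by
  rw [truncLog, derivative_sum, mul_sum]
  refine sum_congr rfl fun l hl ↦ ?_
  rw [derivative_monomial, X_mul_monomial, Nat.sub_add_cancel (mem_Ico.1 hl).1,
    inv_mul_cancel₀ (natCast_zmod_ne_zero_of_mem_Ico hl), monomial_one_right_eq_X_pow]

lemma X_mul_one_sub_X_mul_derivative_truncLog :
    X * (1 - X) * derivative (truncLog p) = X - X ^ p := by
  rw [mul_right_comm, X_mul_derivative_truncLog,
    geom_sum_Ico_mul_neg X (Fact.out : p.Prime).one_le, pow_one]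

lemma coeff_truncLog_sub {n : ℕ} (hn : n ≤ p) :
    (truncLog p).coeff (p - n) = -(truncLog p).coeff n := by
  rw [coeff_truncLog, coeff_truncLog, Nat.cast_sub hn, CharP.cast_eq_zero, zero_sub, inv_neg]
  rcases eq_or_ne n 0 with rfl | hn0
  · simp
  rcases hn.eq_or_lt with rfl | hnp
  · simp
  · rw [if_pos (by omega), if_pos hnp]

lemma natCast_mul_coeff_truncLog_sq {s : ℕ} (hs : s < p) :
    s * (truncLog p ^ 2).coeff s = 2 * ∑ i ∈ range s, (i : ZMod p)⁻¹ := by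
  have hderiv : X * derivative (truncLog p ^ 2) = 2 * (truncLog p * ∑ l ∈ Ico 1 p, X ^ l) := by
    rw [← X_mul_derivative_truncLog, pow_two, derivative_mul]
    ring
  have hleft : (X * derivative (truncLog p ^ 2)).coeff s = s * (truncLog p ^ 2).coeff s := by
    rcases s with _ | s
    · simp
    · rw [coeff_X_mul, coeff_derivative, Nat.cast_add_one, mul_comm]
  rw [← hleft, hderiv, coeff_ofNat_mul, coeff_mul, Nat.sum_antidiagonal_eq_sum_range_succ_mk,
    sum_range_succ]
  simp only [finsetSum_coeff, coeff_X_pow, sum_ite_eq, mem_Ico]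
  rw [if_neg (by omega), mul_zero, add_zero]
  congr 1
  refine sum_congr rfl fun i hi ↦ ?_
  have hi := mem_range.1 hi
  rw [coeff_truncLog, if_pos (by omega), if_pos (by omega), mul_one]

lemma coeff_truncLog_cube (hp : 3 < p) :
    (truncLog p ^ 3).coeff p = -2 * bernoulli (p - 3) := by
  rw [← sum_inv_sq_mul_sum_inv hp, pow_succ, coeff_mul, Nat.sum_antidiagonal_eq_sum_range_succ_mk,
    sum_range_succ, coeff_truncLog_sub le_rfl, coeff_truncLog p, if_neg (lt_irrefl p), neg_zero,
    mul_zero, add_zero, mul_sum]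
  refine sum_congr rfl fun s hs ↦ ?_
  have hs := mem_range.1 hs
  rcases s.eq_zero_or_pos with rfl | hs0
  · simp [coeff_truncLog]
  have hsquare : (truncLog p ^ 2).coeff s = (s : ZMod p)⁻¹ * (2 * ∑ i ∈ range s, (i : ZMod p)⁻¹) :=
    (eq_inv_mul_iff_mul_eq₀ (natCast_zmod_ne_zero_of_mem_Ico (mem_Ico.2 ⟨hs0, hs⟩))).2
      (natCast_mul_coeff_truncLog_sq hs)
  rw [coeff_truncLog_sub hs.le, coeff_truncLog, if_pos hs, hsquare]
  ring

lemma reflect_truncLog : reflect p (truncLog p) = -truncLog p := by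
  ext n
  rw [coeff_reflect, coeff_neg]
  rcases le_or_gt n p with hn | hn
  · rw [revAt_le hn, coeff_truncLog_sub hn]
  · rw [revAt_eq_self_of_lt hn, coeff_truncLog, if_neg hn.not_gt, neg_zero]

lemma reflect_truncLog_pow (n : ℕ) : reflect (n * p) (truncLog p ^ n) = (-truncLog p) ^ n := by
  have hdeg : (truncLog p).natDegree ≤ p := natDegree_truncLog_le.trans (Nat.sub_le p 1)
  induction n with
  | zero => simp
  | succ n ih =>
    rw [Nat.succ_mul, pow_succ, reflect_mul _ _ (natDegree_pow_le_of_le n hdeg) hdeg, ih,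
      reflect_truncLog, pow_succ]

lemma coeff_contract_truncLog_pow_eq_zero {n m : ℕ} (hn : n ≠ 0) (hm : m = 0 ∨ n ≤ m) :
    (contract p (truncLog p ^ n)).coeff m = 0 := by
  have hp : p ≠ 0 := (Fact.out : p.Prime).ne_zero
  rw [coeff_contract hp]
  rcases hm with rfl | hm
  · rw [zero_mul, coeff_zero_eq_eval_zero, eval_pow, ← coeff_zero_eq_eval_zero, coeff_truncLog]
    simp [hn]
  · refine coeff_eq_zero_of_natDegree_lt ?_
    calc (truncLog p ^ n).natDegree ≤ n * (p - 1) := natDegree_pow_le_of_le n natDegree_truncLog_le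
      _ < n * p := Nat.mul_lt_mul_of_pos_left (by omega) (by omega)
      _ ≤ m * p := Nat.mul_le_mul_right p hm

lemma contract_truncLog : contract p (truncLog p) = 0 := by
  ext m
  rw [← pow_one (truncLog p), coeff_contract_truncLog_pow_eq_zero one_ne_zero (by omega),
    coeff_zero]

lemma contract_truncLog_cube (hp : 3 < p) :
    contract p (truncLog p ^ 3) = C (2 * (bernoulli (p - 3) : ZMod p)) * (X ^ 2 - X) := by
  have hp0 : p ≠ 0 := by omega
  ext m
  rw [coeff_C_mul, coeff_sub, coeff_X_pow, coeff_X]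
  have hone : (contract p (truncLog p ^ 3)).coeff 1 = -(2 * (bernoulli (p - 3) : ZMod p)) := by
    rw [coeff_contract hp0, one_mul, coeff_truncLog_cube hp, neg_mul]
  have htwo : (contract p (truncLog p ^ 3)).coeff 2 = 2 * (bernoulli (p - 3) : ZMod p) := by
    have h := congrArg (coeff · p) (reflect_truncLog_pow (p := p) 3)
    simp only [coeff_reflect, revAt_le (show p ≤ 3 * p by omega), show 3 * p - p = 2 * p by omega,
      Odd.neg_pow (by decide : Odd 3), coeff_neg] at h
    rw [coeff_contract hp0, h, coeff_truncLog_cube hp, neg_mul, neg_neg]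
  obtain h | rfl | rfl : (m = 0 ∨ 3 ≤ m) ∨ m = 1 ∨ m = 2 := by omega
  · rw [coeff_contract_truncLog_pow_eq_zero three_ne_zero h, if_neg (by omega), if_neg (by omega),
      sub_zero, mul_zero]
  · rw [hone]; simp
  · rw [htwo]; simp

lemma contract_truncLog_pow_six (hp : 7 < p) :
    contract p (truncLog p ^ 6) =
      C (40 * (bernoulli (p - 3) : ZMod p) ^ 2) * (X ^ 4 - 2 * X ^ 3 + X ^ 2) := by
  rw [contract_pow_six hp X_mul_one_sub_X_mul_derivative_truncLog contract_truncLog,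
    contract_truncLog_cube (by omega)]
  simp only [map_mul, map_pow, map_ofNat]
  ring

lemma coeff_truncLog_pow_six_two_mul (hp : 7 < p) :
    (truncLog p ^ 6).coeff (2 * p) = 40 * (bernoulli (p - 3) : ZMod p) ^ 2 := by
  rw [← coeff_contract (by omega), contract_truncLog_pow_six hp, coeff_C_mul]
  simp [coeff_X_pow]

lemma coeff_truncLog_pow_six_three_mul (hp : 7 < p) :
    (truncLog p ^ 6).coeff (3 * p) = -80 * (bernoulli (p - 3) : ZMod p) ^ 2 := by
  rw [← coeff_contract (by omega), contract_truncLog_pow_six hp, coeff_C_mul]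
  simp [coeff_X_pow]
  ring

end TruncLog

section HSum

open Polynomial hiding bernoulli
open Finset

variable {p : ℕ}

lemma hsumLt_eq_sum_inv (n N : ℕ) :
    hsumLt p n N = ∑ l ∈ (Fintype.piFinset fun _ : Fin n ↦ Ico 1 p) with ∑ i, l i = N,
      ((∏ i, l i : ℕ) : ℚ)⁻¹ := by
  simp only [hsumLt, one_div, Nat.cast_prod, prod_inv_distrib]

variable [Fact p.Prime]

lemma prod_natCast_ne_zero {ι : Type*} [Fintype ι] {l : ι → ℕ} (hl : ∀ i, l i ∈ Ico 1 p) :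
    ((∏ i, l i : ℕ) : ZMod p) ≠ 0 := by
  rw [Nat.cast_prod]
  exact prod_ne_zero_iff.2 fun i _ ↦ natCast_zmod_ne_zero_of_mem_Ico (hl i)

theorem hsumLt_mem_ratCastDomain (n N : ℕ) : hsumLt p n N ∈ ratCastDomain (ZMod p) := by
  rw [hsumLt_eq_sum_inv]
  exact sum_mem fun l hl ↦ inv_natCast_mem_ratCastDomain <|
    prod_natCast_ne_zero (Fintype.mem_piFinset.1 (mem_filter.1 hl).1)

theorem ratCast_hsumLt (n N : ℕ) : (hsumLt p n N : ZMod p) = (truncLog p ^ n).coeff N := by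
  have hexpand : truncLog p ^ n = ∑ l ∈ Fintype.piFinset fun _ : Fin n ↦ Ico 1 p,
      monomial (∑ i, l i) ((∏ i, l i : ℕ) : ZMod p)⁻¹ := by
    rw [← Fin.prod_const, truncLog, prod_univ_sum]
    refine sum_congr rfl fun l _ ↦ ?_
    simp only [← C_mul_X_pow_eq_monomial, prod_mul_distrib, prod_pow_eq_pow_sum, Nat.cast_prod,
      ← prod_inv_distrib, map_prod]
  rw [hexpand, finsetSum_coeff, hsumLt_eq_sum_inv, ratCast_sum, sum_filter]
  · simp only [coeff_monomial, Rat.cast_inv_nat]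
  · exact fun l hl ↦ inv_natCast_mem_ratCastDomain <|
      prod_natCast_ne_zero (Fintype.mem_piFinset.1 (mem_filter.1 hl).1)

lemma bernoulli_sub_three_mem_ratCastDomain : bernoulli (p - 3) ∈ ratCastDomain (ZMod p) :=
  have := (Fact.out : p.Prime).two_le
  bernoulli_mem_ratCastDomain (natCast_factorial_zmod_ne_zero (by omega))

lemma ratCast_mul_bernoulli_sq (c : ℤ) :
    ((c * bernoulli (p - 3) ^ 2 : ℚ) : ZMod p) = c * (bernoulli (p - 3) : ZMod p) ^ 2 := by
  have hb := bernoulli_sub_three_mem_ratCastDomain (p := p)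
  rw [pow_two, Rat.cast_mul_of_ne_zero (mem_ratCastDomain.1 (intCast_mem _ c))
    (mem_ratCastDomain.1 (mul_mem hb hb)), Rat.cast_mul_of_ne_zero hb hb, Rat.cast_intCast, pow_two]

lemma ratCong_hsumLt_of_coeff_eq {n N : ℕ} (c : ℤ)
    (h : (truncLog p ^ n).coeff N = c * (bernoulli (p - 3) : ZMod p) ^ 2) :
    ratCong p 1 (hsumLt p n N) (c * bernoulli (p - 3) ^ 2) := by
  refine ratCong_of_ratCast_eq (hsumLt_mem_ratCastDomain n N) ?_ ?_
  · exact mul_mem (intCast_mem _ c) (pow_mem bernoulli_sub_three_mem_ratCastDomain 2)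
  · rw [ratCast_hsumLt, ratCast_mul_bernoulli_sq, h]

end HSum

theorem stmt_16 (p : ℕ) (hp : p.Prime) (hp11 : 11 ≤ p) :
    ratCong p 1 (hsumLt p 6 (2 * p)) (40 * bernoulli (p - 3) ^ 2) ∧
    ratCong p 1 (hsumLt p 6 (3 * p)) (-80 * bernoulli (p - 3) ^ 2) := by
  have : Fact p.Prime := ⟨hp⟩
  have htwo := ratCong_hsumLt_of_coeff_eq 40
    (mod_cast coeff_truncLog_pow_six_two_mul (show 7 < p by omega))
  have hthree := ratCong_hsumLt_of_coeff_eq (-80)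
    (by push_cast; exact coeff_truncLog_pow_six_three_mul (show 7 < p by omega))
  exact ⟨mod_cast htwo, mod_cast hthree⟩
end
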